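/- arXiv:2107.12126 — 2 statements merged into one kernel-verified Lean document; each statement's English description precedes it below -/
import Mathlib

section
/- If (G, σ) is a signed bipartite planar simple graph on n vertices where n is even and n ≥ 2, then χ_c(G, σ) ≤ 4 − 8/(n+2). -/
/-!
Let `n = 2 m`. Place `2 n` equally spaced points on a circle of length `4 - 8 / (n + 2)`, so that
neighbouring points are at distance `1 / (m + 1)`, and let `A` be one part of the bipartition.
Turn `(G, σ)` into an orientation of `G`: positive edges are directed one way between the parts and
negative edges the other way. *Switching* a vertex reverses all the edges at it. If the orientation
can be switched to an acyclic one, rank the vertices along the acyclic orientation. The vertex of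
rank `k` is put on the `k`-th point of the circle, or on the antipodal point if it has been
switched, and the vertices outside `A` are then rotated by a quarter turn. The inequality
between the ranks of the ends of an edge becomes exactly the distance required by its sign
(`circle_ineq`, `coloring_of_realizable`).

It remains to show that every orientation of a bipartite planar graph can be switched to an acyclic
one. What is used of planarity is that `G` has an abstract dual over `ZMod 2` (`HasDual`), which gives
Euler's bound `|E| ≤ 2 |V| - 4` for triangle-free graphs (`edge_bound`). In particular every set `X`
of at least two vertices spans at most `2 |X| - 3` edges (`good_of_bipartite`). Graphs with an
abstract dual and this sparsity are handled by induction on the number of vertices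
(`Good.realizable`), triangles being allowed. Call `X` tight if it spans exactly `2 |X| - 3` edges.

* If no proper subset of at least three vertices is tight, then the graph has at most three
  vertices or is triangle-free, and by Euler's bound it is not tight either. Any edge `uv` can then
  be contracted, once `v` is switched so that the two edges from a common neighbour agree
  (`realizable_of_no_tight`).
* Otherwise take a largest such tight subset `X`, solve the problem on `X` by induction, and apply
  a projective transformation to the heights of its vertices which sends one vertex `x₀` to
  infinity. With the corresponding switching, all edges from `x₀` to the rest `K` of `X` point the
  same way, so that `K` can be contracted to a single vertex. By maximality of `X` and a suitable choice
  of `x₀`, a vertex outside `X` has at most one neighbour in `K`, so that no other parallel edges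
  arise, and the contracted graph is again sparse (`tight_contr`, `realizable_of_tight`).

In both cases a solution for the contracted graph is lifted by spreading out the contracted vertices
at an infinitesimal scale (`Realizable.lift`).

Finally a plane graph has an abstract dual (`hasDual_of_isPlanar`), without an appeal to the Jordan
curve theorem. Vertices, fattened by the adjacent thirds of their arcs, and the middle thirds of the
arcs are connected compact sets. Replacing each by the set of unit squares it meets after a large
dilation exhibits the graph as a minor of the grid (`exists_raster`, `hasDual_of_drawing`). The grid
has an abstract dual by a direct computation (`hasDual_grid`), and minors inherit abstract duals
(`HasDual.minor`).
-/

open scoped ENNReal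

/-- A circular `r`-coloring of the signed graph `(G, σ)` (`σ e = true` meaning the edge `e`
is positive): a map `f : V → [0, r)` such that positive edges `uv` satisfy
`1 ≤ |f u - f v| ≤ r - 1` and negative edges satisfy
`|f u - f v| ≤ r/2 - 1` or `|f u - f v| ≥ r/2 + 1`. -/
def IsCircularColoring {V : Type*} (G : SimpleGraph V) (σ : Sym2 V → Bool) (r : ℝ)
    (f : V → ℝ) : Prop :=
  (∀ v, 0 ≤ f v ∧ f v < r) ∧
  ∀ u v, G.Adj u v →
    (if σ s(u, v) then 1 ≤ |f u - f v| ∧ |f u - f v| ≤ r - 1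
     else |f u - f v| ≤ r / 2 - 1 ∨ r / 2 + 1 ≤ |f u - f v|)

def HasCircularColoring {V : Type*} (G : SimpleGraph V) (σ : Sym2 V → Bool) (r : ℝ) : Prop :=
  ∃ f : V → ℝ, IsCircularColoring G σ r f

/-- The circular chromatic number of a signed graph, as an element of `ℝ≥0∞`:
the infimum of all real numbers `r ≥ 2` admitting a circular `r`-coloring
(`⊤` if there is none). -/
noncomputable def circChrom {V : Type*} (G : SimpleGraph V) (σ : Sym2 V → Bool) : ℝ≥0∞ :=
  sInf (ENNReal.ofReal '' {r : ℝ | 2 ≤ r ∧ HasCircularColoring G σ r})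

/-- A graph is planar if it has an embedding in the plane: points for vertices and
injective continuous arcs for edges, where an arc joins the endpoints of its edge,
the interior of an arc avoids all vertex points, and two distinct arcs meet only
at vertex points (hence only at common endpoints). -/
def IsPlanar {V : Type*} (G : SimpleGraph V) : Prop :=
  ∃ (p : V → ℝ × ℝ) (γ : Sym2 V → unitInterval → ℝ × ℝ),
    Function.Injective p ∧
    (∀ e ∈ G.edgeSet, Continuous (γ e) ∧ Function.Injective (γ e)) ∧
    (∀ u v, G.Adj u v → ({γ s(u, v) 0, γ s(u, v) 1} : Set (ℝ × ℝ)) = {p u, p v}) ∧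
    (∀ e ∈ G.edgeSet, ∀ t : unitInterval, t ≠ 0 → t ≠ 1 → γ e t ∉ Set.range p) ∧
    (∀ e ∈ G.edgeSet, ∀ e' ∈ G.edgeSet, e ≠ e' → ∀ s t : unitInterval,
      γ e s = γ e' t → γ e s ∈ Set.range p)

/-- A graph is bipartite if its vertex set splits into a part `A` and its complement
such that every edge joins the two parts. -/
def IsBipartiteGraph {V : Type*} (G : SimpleGraph V) : Prop :=
  ∃ A : Set V, ∀ u v, G.Adj u v → (u ∈ A ↔ v ∉ A)

/-- A graph is 2-degenerate if every nonempty (induced) subgraph has a vertex of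
degree at most 2 in it. -/
def TwoDegenerate {V : Type*} (G : SimpleGraph V) : Prop :=
  ∀ s : Set V, s.Nonempty → ∃ v ∈ s, ({u ∈ s | G.Adj v u}).ncard ≤ 2

/-! ### Abstract duals and minors -/

/-- The boundary operator over `ZMod 2`: an edge `s(a, b)` is sent to `a + b`
(so that a loop has boundary `0`). -/
noncomputable def bd (V : Type*) : (Sym2 V →₀ ZMod 2) →ₗ[ZMod 2] (V →₀ ZMod 2) :=
  Finsupp.linearCombination (ZMod 2) (Sym2.lift
    ⟨fun a b => Finsupp.single a 1 + Finsupp.single b 1, fun _ _ => add_comm _ _⟩)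

lemma bd_single {V : Type*} (a b : V) (c : ZMod 2) :
    bd V (Finsupp.single s(a, b) c) = Finsupp.single a c + Finsupp.single b c := by
  simp [bd]

lemma zmod2_add_self (a : ZMod 2) : a + a = 0 := CharTwo.add_self_eq_zero a

lemma bd_mapDomain {V W : Type*} (q : V → W) (x : Sym2 V →₀ ZMod 2) :
    bd W (x.mapDomain (Sym2.map q)) = (bd V x).mapDomain q := by
  induction x using Finsupp.induction_linear with
  | zero => simp
  | add f g hf hg => simp [Finsupp.mapDomain_add, hf, hg]
  | single e c =>
    induction e with
    | h a b => simp [bd_single, Finsupp.mapDomain_single, Finsupp.mapDomain_add]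

/-- The edge set `E` has an abstract dual over `ZMod 2`: there are labels `l e`, `r e` (faces)
on the two sides of each edge `e ∈ E` such that the cycles supported on `E` are exactly the
cuts of the dual multigraph with edges `l e — r e`. -/
def HasDual {V : Type*} (E : Set (Sym2 V)) : Prop :=
  ∃ (I : Type) (l r : Sym2 V → I), ∀ x ∈ Finsupp.supported (ZMod 2) (ZMod 2) E,
    (bd V x = 0 ↔ ∃ w : I → ZMod 2, ∀ e ∈ E, x e = w (l e) + w (r e))

/-- Deleting edges amounts to merging the two faces on either side of each of them. -/
lemma HasDual.mono {V : Type*} {E F : Set (Sym2 V)} (h : HasDual E) (hFE : F ⊆ E) :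
    HasDual F := by
  obtain ⟨I, l, r, h⟩ := h
  let R : I → I → Prop := fun i j => ∃ e ∈ E, e ∉ F ∧ i = l e ∧ j = r e
  refine ⟨Quot R, fun e => Quot.mk R (l e), fun e => Quot.mk R (r e), fun x hx => ?_⟩
  have hx' : x ∈ Finsupp.supported (ZMod 2) (ZMod 2) E := Finsupp.supported_mono hFE hx
  have hx0 : ∀ e, e ∉ F → x e = 0 := by
    intro e he
    by_contra hne
    exact he (hx (Finsupp.mem_support_iff.2 hne))
  rw [h x hx']
  constructor
  · rintro ⟨w, hw⟩
    refine ⟨Quot.lift w ?_, fun e he => hw e (hFE he)⟩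
    rintro i j ⟨e, heE, heF, rfl, rfl⟩
    have := hw e heE
    rw [hx0 e heF] at this
    exact (CharTwo.add_eq_zero).1 this.symm
  · rintro ⟨w, hw⟩
    refine ⟨fun i => w (Quot.mk R i), fun e he => ?_⟩
    by_cases heF : e ∈ F
    · exact hw e heF
    · have : Quot.mk R (l e) = Quot.mk R (r e) := Quot.sound ⟨e, he, heF, rfl, rfl⟩
      simp only [this, hx0 e heF, zmod2_add_self]

lemma bd_diag {V : Type*} (x : Sym2 V →₀ ZMod 2) (h : ∀ e ∈ x.support, e.IsDiag) :
    bd V x = 0 := by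
  rw [bd, Finsupp.linearCombination_apply, Finsupp.sum]
  refine Finset.sum_eq_zero fun e he => ?_
  have := h e he
  induction e with
  | h a b =>
    simp only [Sym2.mk_isDiag_iff] at this
    subst this
    simp [← Finsupp.single_add, zmod2_add_self]

/-- Minors inherit abstract duals. The map `q` collapses branch sets to the vertices of the
minor, `c` picks a base point in each branch set, and `hconn` says that each vertex of `D` is
joined to the base point of its branch set by a chain of edges inside that branch set. -/
lemma HasDual.minor {V W : Type*} {E : Set (Sym2 V)} {E' : Set (Sym2 W)} (h : HasDual E)
    (q : V → W) (c : W → V) (D : Set V) (hD : D.Finite)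
    (hnd : ∀ e ∈ E', ¬ e.IsDiag)
    (hlift : ∀ e' ∈ E', ∃ e ∈ E, (∀ v ∈ e, v ∈ D) ∧ e.map q = e')
    (hconn : ∀ a ∈ D, ∃ F ∈ Finsupp.supported (ZMod 2) (ZMod 2)
      {e | e ∈ E ∧ (∀ v ∈ e, v ∈ D) ∧ (e.map q).IsDiag},
        bd V F = Finsupp.single a 1 + Finsupp.single (c (q a)) 1) :
    HasDual E' := by
  classical
  rcases E'.eq_empty_or_nonempty with rfl | ⟨e0, he0⟩
  · refine ⟨Unit, fun _ => (), fun _ => (), fun x hx => ?_⟩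
    have : x = 0 := by simpa using hx
    simp [this]
  have : Nonempty (Sym2 V) := ⟨(hlift e0 he0).choose⟩
  choose! ι hιE hιD hιq using hlift
  set inner : Set (Sym2 V) := {e | e ∈ E ∧ (∀ v ∈ e, v ∈ D) ∧ (e.map q).IsDiag} with hinner
  have hιinner : ∀ e' ∈ E', ι e' ∉ inner := fun e' he' hi => hnd e' he' (by
    have := hi.2.2; rwa [hιq e' he'] at this)
  have hιinj : Set.InjOn ι E' := fun a ha b hb hab => by
    rw [← hιq a ha, ← hιq b hb, hab]
  obtain ⟨I, l, r, h⟩ := h.mono (F := inner ∪ ι '' E') (by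
    rintro e (he | ⟨e', he', rfl⟩)
    · exact he.1
    · exact hιE e' he')
  have hfin : (inner ∪ ι '' E').Finite := by
    refine (hD.prod hD |>.image (fun p : V × V => s(p.1, p.2))).subset ?_
    intro e he
    have : ∀ v ∈ e, v ∈ D := by
      rcases he with he | ⟨e', he', rfl⟩
      · exact he.2.1
      · exact hιD e' he'
    induction e with
    | h a b => exact ⟨(a, b), ⟨this a (by simp), this b (by simp)⟩, rfl⟩
  refine ⟨I, fun e => l (ι e), fun e => r (ι e), fun x hx => ⟨fun hx0 => ?_, ?_⟩⟩
  · have hsx : (x.mapDomain ι).support ⊆ x.support.image ι := Finsupp.mapDomain_support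
    have hback : (x.mapDomain ι).mapDomain (Sym2.map q) = x := by
      rw [← Finsupp.mapDomain_comp]
      conv_rhs => rw [← Finsupp.mapDomain_id (v := x)]
      exact Finsupp.mapDomain_congr fun e he => hιq e (hx he)
    have hmap0 : (bd V (x.mapDomain ι)).mapDomain q = 0 := by
      rw [← bd_mapDomain, hback, hx0]
    have hdD : ∀ a ∈ (bd V (x.mapDomain ι)).support, a ∈ D := by
      have : bd V (x.mapDomain ι) ∈ Finsupp.supported (ZMod 2) (ZMod 2) D := by
        rw [bd, Finsupp.linearCombination_apply]
        refine Submodule.sum_mem _ fun e he => Submodule.smul_mem _ _ ?_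
        obtain ⟨e', he', rfl⟩ := Finset.mem_image.1 (hsx he)
        have := hιD e' (hx he')
        generalize ι e' = f at this
        induction f with
        | h a b =>
          exact Submodule.add_mem _ (Finsupp.single_mem_supported _ _ (this a (by simp)))
            (Finsupp.single_mem_supported _ _ (this b (by simp)))
      exact fun a ha => this ha
    choose! F hF hFbd using hconn
    set d := bd V (x.mapDomain ι) with hd
    let y : Sym2 V →₀ ZMod 2 := d.sum fun a t => t • F a
    have hy : y ∈ Finsupp.supported (ZMod 2) (ZMod 2) inner :=
      Submodule.sum_mem _ fun a ha => Submodule.smul_mem _ _ (hF a (hdD a ha))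
    have hybd : bd V y = d := by
      have h1 : bd V y = d.sum fun a t => t • (Finsupp.single a 1 + Finsupp.single (c (q a)) 1) := by
        simp only [y, Finsupp.sum, map_sum, map_smul]
        exact Finset.sum_congr rfl fun a ha => by rw [hFbd a (hdD a ha)]
      have h2 : d.sum (fun a t => t • (Finsupp.single (c (q a)) (1 : ZMod 2))) = 0 := by
        have : (d.mapDomain q).mapDomain c = 0 := by rw [hmap0]; simp
        rw [← Finsupp.mapDomain_comp] at this
        rw [← this, Finsupp.mapDomain]
        simp
      rw [h1]
      simp only [smul_add]
      rw [Finsupp.sum_add, h2, add_zero]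
      simp
    have hz : x.mapDomain ι + y ∈ Finsupp.supported (ZMod 2) (ZMod 2) (inner ∪ ι '' E') := by
      refine Submodule.add_mem _ ?_ (Finsupp.supported_mono Set.subset_union_left hy)
      intro e he
      obtain ⟨e', he', rfl⟩ := Finset.mem_image.1 (hsx he)
      exact Or.inr ⟨e', hx he', rfl⟩
    obtain ⟨w, hw⟩ := (h _ hz).1 (by rw [map_add, hybd, ← hd]; ext a; simp [zmod2_add_self])
    refine ⟨w, fun e he => ?_⟩
    rw [← hw (ι e) (Or.inr ⟨e, he, rfl⟩), Finsupp.add_apply]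
    have hy0 : y (ι e) = 0 := by
      by_contra hne
      exact hιinner e he (hy (Finsupp.mem_support_iff.2 hne))
    rw [hy0, add_zero, Finsupp.mapDomain_apply' E' x hx hιinj he]
  · rintro ⟨w, hw⟩
    let g : Sym2 V → ZMod 2 := fun e => if e ∈ inner ∪ ι '' E' then w (l e) + w (r e) else 0
    let y : Sym2 V →₀ ZMod 2 := Finsupp.onFinset hfin.toFinset g (by
      intro e he
      by_contra hne
      exact he (if_neg fun hh => hne (hfin.mem_toFinset.2 hh)))
    have hyg : ∀ e, y e = g e := fun e => rfl
    have hys : y ∈ Finsupp.supported (ZMod 2) (ZMod 2) (inner ∪ ι '' E') := by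
      intro e he
      by_contra hne
      exact (Finsupp.mem_support_iff.1 he) (if_neg hne)
    have hy0 : bd V y = 0 := (h y hys).2 ⟨w, fun e he => if_pos he⟩
    -- `y` and the lift of `x` agree outside the branch sets
    have hdiff : y - x.mapDomain ι ∈ Finsupp.supported (ZMod 2) (ZMod 2) inner := by
      intro e he
      by_contra hne
      apply Finsupp.mem_support_iff.1 he
      rw [Finsupp.sub_apply, hyg]
      by_cases heι : e ∈ ι '' E'
      · obtain ⟨e', he', rfl⟩ := heι
        rw [Finsupp.mapDomain_apply' E' x hx hιinj he', hw e' he']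
        simp only [g]
        rw [if_pos (Set.mem_union_right _ (Set.mem_image_of_mem ι he')), sub_self]
      · have h1 : g e = 0 := if_neg (by rintro (h | h); exacts [hne h, heι h])
        rw [h1, zero_sub, neg_eq_zero]
        by_contra h2
        obtain ⟨e', he', rfl⟩ := Finset.mem_image.1
          (Finsupp.mapDomain_support (Finsupp.mem_support_iff.2 h2))
        exact heι ⟨e', hx he', rfl⟩
    have hback : (x.mapDomain ι).mapDomain (Sym2.map q) = x := by
      rw [← Finsupp.mapDomain_comp]
      conv_rhs => rw [← Finsupp.mapDomain_id (v := x)]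
      exact Finsupp.mapDomain_congr fun e he => hιq e (hx he)
    have h3 : bd W ((y - x.mapDomain ι).mapDomain (Sym2.map q)) = 0 := by
      apply bd_diag
      intro e he
      obtain ⟨e', he', rfl⟩ := Finset.mem_image.1 (Finsupp.mapDomain_support he)
      exact (hdiff he').2.2
    have h4 : bd W (x.mapDomain ι |>.mapDomain (Sym2.map q)) = 0 := by
      have h5 : x.mapDomain ι = y - (y - x.mapDomain ι) := by abel
      rw [h5, sub_eq_add_neg, Finsupp.mapDomain_add, map_add, bd_mapDomain, hy0]
      have : Finsupp.mapDomain (Sym2.map q) (-(y - x.mapDomain ι))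
          = - Finsupp.mapDomain (Sym2.map q) (y - x.mapDomain ι) :=
        map_neg (Finsupp.mapDomain.addMonoidHom (M := ZMod 2) (Sym2.map q)) _
      rw [this, map_neg, h3]
      simp
    rwa [hback] at h4

/-! ### Euler's bound -/

/-- A cycle has no vertex of degree one. -/
lemma cycle_next {V : Type*} {z : Sym2 V →₀ ZMod 2} (hz : bd V z = 0)
    (hnd : ∀ e ∈ z.support, ¬ e.IsDiag) {a b : V} (hab : s(a, b) ∈ z.support) :
    ∃ c, c ≠ a ∧ s(b, c) ∈ z.support := by
  classical
  by_contra! hc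
  have h1 : bd V z b = z s(a, b) := by
    rw [bd, Finsupp.linearCombination_apply, Finsupp.sum, Finsupp.finsetSum_apply]
    rw [Finset.sum_eq_single s(a, b)]
    · have : a ≠ b := by simpa using hnd _ hab
      simp [this]
    · intro e he hne
      induction e with
      | h c d =>
        have hcb : c ≠ b := by
          rintro rfl
          by_cases hda : d = a
          · subst hda; exact hne Sym2.eq_swap
          · exact hc d hda he
        have hdb : d ≠ b := by
          rintro rfl
          by_cases hca : c = a
          · subst hca; exact hne rfl
          · exact hc c hca (by rwa [Sym2.eq_swap])
        simp [hcb, hdb]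
    · exact fun h => absurd hab h
  rw [hz] at h1
  exact (Finsupp.mem_support_iff.1 hab) h1.symm

/-- In a triangle-free simple graph every nonzero cycle has at least four edges. -/
lemma four_le_card_cycle {V : Type*} {G : SimpleGraph V}
    (htf : ∀ a b c, G.Adj a b → G.Adj b c → G.Adj c a → False)
    {z : Sym2 V →₀ ZMod 2} (hz : bd V z = 0) (hs : ∀ e ∈ z.support, e ∈ G.edgeSet)
    (h0 : z ≠ 0) : 4 ≤ z.support.card := by
  classical
  have hnd : ∀ e ∈ z.support, ¬ e.IsDiag := fun e he => G.not_isDiag_of_mem_edgeSet (hs e he)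
  obtain ⟨e, he⟩ := Finsupp.support_nonempty_iff.2 h0
  induction e with
  | h a b =>
    obtain ⟨c, hca, hbc⟩ := cycle_next hz hnd he
    obtain ⟨d, hdb, hcd⟩ := cycle_next hz hnd hbc
    obtain ⟨f, hfb, haf⟩ := cycle_next hz hnd (a := b) (b := a) (by rwa [Sym2.eq_swap])
    have hab : G.Adj a b := hs _ he
    have hbc' : G.Adj b c := hs _ hbc
    have hcd' : G.Adj c d := hs _ hcd
    have haf' : G.Adj a f := hs _ haf
    have hda : d ≠ a := by rintro rfl; exact htf _ _ _ hab hbc' hcd'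
    have hsub : ({s(a, b), s(b, c), s(c, d), s(a, f)} : Finset (Sym2 V)) ⊆ z.support := by
      intro e; simp only [Finset.mem_insert, Finset.mem_singleton]
      rintro (rfl | rfl | rfl | rfl) <;> assumption
    refine le_trans ?_ (Finset.card_le_card hsub)
    have := hab.ne
    have := hbc'.ne
    have := hcd'.ne
    have := haf'.ne
    rw [Finset.card_insert_of_notMem, Finset.card_insert_of_notMem, Finset.card_insert_of_notMem,
      Finset.card_singleton]
    all_goals
      simp only [Finset.mem_insert, Finset.mem_singleton, Sym2.eq_iff]
      grind

/-- Euler's bound: a triangle-free simple graph on at least three vertices that has an abstract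
dual has at most `2 |S| - 4` edges. The cuts around single faces span the cycle space and sum to
zero, each nonzero one has at least four edges, and each edge lies on at most two of them. -/
lemma edge_bound {V : Type*} [Finite V] (G : SimpleGraph V) (S : Finset V) (hS : 3 ≤ S.card)
    (hGS : ∀ u v, G.Adj u v → u ∈ S)
    (htf : ∀ a b c, G.Adj a b → G.Adj b c → G.Adj c a → False)
    (h : HasDual G.edgeSet) : G.edgeSet.ncard + 4 ≤ 2 * S.card := by
  classical
  obtain ⟨I, l, r, h⟩ := h
  have hfin : G.edgeSet.Finite := Set.toFinite _
  set E := hfin.toFinset with hE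
  have hmE : ∀ e, e ∈ E ↔ e ∈ G.edgeSet := fun e => hfin.mem_toFinset
  have hcard : G.edgeSet.ncard = E.card := Set.ncard_eq_toFinset_card _ hfin
  rw [hcard]
  let P := Finsupp.supported (ZMod 2) (ZMod 2) G.edgeSet
  -- the cut around the face `i`
  let δ : I → Sym2 V →₀ ZMod 2 := fun i => Finsupp.onFinset E
    (fun e => if e ∈ E then (if l e = i then 1 else 0) + (if r e = i then 1 else 0) else 0)
    (by intro e; contrapose!; intro he; simp [he])
  have hδ : ∀ i e, δ i e =
    if e ∈ E then (if l e = i then 1 else 0) + (if r e = i then 1 else 0) else 0 := fun i e => rfl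
  have hδP : ∀ i, δ i ∈ P := by
    intro i e he
    rw [← hmE]
    by_contra hne
    exact Finsupp.mem_support_iff.1 he (if_neg hne)
  have hδ0 : ∀ i, bd V (δ i) = 0 := by
    intro i
    refine (h _ (hδP i)).2 ⟨fun j => if j = i then 1 else 0, fun e he => ?_⟩
    rw [hδ, if_pos ((hmE e).2 he)]
  let I0 : Finset I := E.image l ∪ E.image r
  let I1 : Finset I := I0.filter (fun i => δ i ≠ 0)
  have hexp : ∀ z ∈ P, ∀ w : I → ZMod 2, (∀ e ∈ G.edgeSet, z e = w (l e) + w (r e)) →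
      z = ∑ i ∈ I1, w i • δ i := by
    intro z hz w hw
    have h1 : ∑ i ∈ I1, w i • δ i = ∑ i ∈ I0, w i • δ i := by
      refine Finset.sum_subset (Finset.filter_subset _ _) fun i hi hi' => ?_
      have : δ i = 0 := by
        by_contra hne; exact hi' (Finset.mem_filter.2 ⟨hi, hne⟩)
      rw [this, smul_zero]
    rw [h1]
    ext e
    rw [Finsupp.finsetSum_apply]
    simp only [Finsupp.smul_apply, hδ, smul_eq_mul]
    by_cases he : e ∈ E
    · have hl : l e ∈ I0 := Finset.mem_union_left _ (Finset.mem_image_of_mem _ he)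
      have hr : r e ∈ I0 := Finset.mem_union_right _ (Finset.mem_image_of_mem _ he)
      simp only [if_pos he, mul_add, Finset.sum_add_distrib, mul_ite, mul_one, mul_zero,
        Finset.sum_ite_eq, if_pos hl, if_pos hr]
      exact hw e ((hmE e).1 he)
    · simp only [if_neg he, mul_zero, Finset.sum_const_zero]
      by_contra hne
      exact he ((hmE e).2 (hz (Finsupp.mem_support_iff.2 hne)))
  have hsum0 : ∑ i ∈ I1, δ i = 0 := by
    have := hexp 0 (Submodule.zero_mem _) (fun _ => 1) (by intro e _; rw [zmod2_add_self]; rfl)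
    simpa using this.symm
  have h4 : 4 * I1.card ≤ 2 * E.card := by
    have h5 : ∀ i ∈ I1, 4 ≤ (δ i).support.card := fun i hi =>
      four_le_card_cycle htf (hδ0 i) (hδP i) (Finset.mem_filter.1 hi).2
    calc 4 * I1.card = ∑ i ∈ I1, 4 := by simp [mul_comm]
      _ ≤ ∑ i ∈ I1, (δ i).support.card := Finset.sum_le_sum h5
      _ ≤ ∑ i ∈ I0, (δ i).support.card :=
        Finset.sum_le_sum_of_subset (Finset.filter_subset _ _)
      _ ≤ ∑ i ∈ I0, ((E.filter (fun e => l e = i)).card + (E.filter (fun e => r e = i)).card) := by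
        refine Finset.sum_le_sum fun i _ => ?_
        refine le_trans (Finset.card_le_card ?_) (Finset.card_union_le _ _)
        intro e he
        have he' := Finsupp.mem_support_iff.1 he
        rw [hδ] at he'
        simp only [Finset.mem_union, Finset.mem_filter]
        by_contra hne
        push Not at hne
        apply he'
        split_ifs with a b c c <;> simp_all
      _ = 2 * E.card := by
        rw [Finset.sum_add_distrib,
          ← Finset.card_eq_sum_card_fiberwise (f := l) (t := I0)
            (fun e he => Finset.mem_union_left _ (Finset.mem_image_of_mem _ he)),
          ← Finset.card_eq_sum_card_fiberwise (f := r) (t := I0)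
            (fun e he => Finset.mem_union_right _ (Finset.mem_image_of_mem _ he))]
        ring
  have hrk := LinearMap.finrank_range_add_finrank_ker (K := ZMod 2) (V := P) (V₂ := V →₀ ZMod 2) ((bd V).domRestrict P)
  have hPdim : Module.finrank (ZMod 2) P = E.card := by
    rw [(Finsupp.supportedEquivFinsupp (R := ZMod 2) (M := ZMod 2) G.edgeSet).finrank_eq]
    have := hfin.fintype
    rw [Module.finrank_finsupp_self, ← hcard, Set.ncard_eq_toFinset_card', Set.toFinset_card]
  obtain ⟨s0, hs0⟩ : S.Nonempty := Finset.card_pos.1 (by omega)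
  have hrange : Module.finrank (ZMod 2) (LinearMap.range ((bd V).domRestrict P)) ≤ S.card - 1 := by
    rw [LinearMap.range_domRestrict]
    let T : Finset (V →₀ ZMod 2) := (S.erase s0).image
      (fun v => Finsupp.single v 1 + Finsupp.single s0 1)
    have hT : ∀ v ∈ S, (Finsupp.single v 1 + Finsupp.single s0 1 : V →₀ ZMod 2) ∈
        Submodule.span (ZMod 2) (T : Set (V →₀ ZMod 2)) := by
      intro v hv
      by_cases hvs : v = s0
      · rw [hvs, ← Finsupp.single_add, zmod2_add_self]; simp
      · exact Submodule.subset_span (Finset.mem_image_of_mem _ (Finset.mem_erase.2 ⟨hvs, hv⟩))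
    have hle : Submodule.map (bd V) P ≤ Submodule.span (ZMod 2) (T : Set (V →₀ ZMod 2)) := by
      rw [show P = _ from Finsupp.supported_eq_span_single (ZMod 2) G.edgeSet, Submodule.map_span,
        Submodule.span_le]
      rintro _ ⟨_, ⟨e, he, rfl⟩, rfl⟩
      induction e with
      | h a b =>
        rw [bd_single]
        have h1 := Submodule.add_mem _ (hT a (hGS _ _ he)) (hT b (hGS _ _ (G.adj_symm he)))
        have h2 : (Finsupp.single a 1 + Finsupp.single s0 1 +
          (Finsupp.single b 1 + Finsupp.single s0 1) : V →₀ ZMod 2) =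
            Finsupp.single a 1 + Finsupp.single b 1 := by
          rw [add_add_add_comm, ← Finsupp.single_add (a := s0), zmod2_add_self]; simp
        rw [h2] at h1
        exact h1
    calc _ ≤ _ := Submodule.finrank_mono hle
      _ ≤ T.card := finrank_span_finset_le_card T
      _ ≤ (S.erase s0).card := Finset.card_image_le
      _ = S.card - 1 := Finset.card_erase_of_mem hs0
  have hker : Module.finrank (ZMod 2) (LinearMap.ker ((bd V).domRestrict P)) ≤ I1.card - 1 := by
    rw [← Submodule.finrank_map_subtype_eq]
    have hZ : ∀ z ∈ Submodule.map P.subtype (LinearMap.ker ((bd V).domRestrict P)),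
        z ∈ P ∧ bd V z = 0 := by
      rintro _ ⟨z, hz, rfl⟩
      exact ⟨z.2, hz⟩
    rcases I1.eq_empty_or_nonempty with hI | ⟨i0, hi0⟩
    · have : Submodule.map P.subtype (LinearMap.ker ((bd V).domRestrict P)) = ⊥ := by
        rw [eq_bot_iff]
        intro z hz
        obtain ⟨w, hw⟩ := (h z (hZ z hz).1).1 (hZ z hz).2
        rw [Submodule.mem_bot, hexp z (hZ z hz).1 w hw, hI, Finset.sum_empty]
      rw [this]; simp
    · have hle : Submodule.map P.subtype (LinearMap.ker ((bd V).domRestrict P)) ≤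
          Submodule.span (ZMod 2) (((I1.erase i0).image δ : Finset _) : Set (Sym2 V →₀ ZMod 2)) := by
        intro z hz
        obtain ⟨w, hw⟩ := (h z (hZ z hz).1).1 (hZ z hz).2
        have h1 : z = ∑ i ∈ I1, (w i - w i0) • δ i := by
          simp only [sub_smul, Finset.sum_sub_distrib, ← Finset.smul_sum, hsum0, smul_zero, sub_zero]
          exact hexp z (hZ z hz).1 w hw
        rw [h1]
        refine Submodule.sum_mem _ fun i hi => ?_
        by_cases hii : i = i0
        · rw [hii, sub_self, zero_smul]; exact Submodule.zero_mem _
        · exact Submodule.smul_mem _ _ (Submodule.subset_span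
            (Finset.mem_image_of_mem _ (Finset.mem_erase.2 ⟨hii, hi⟩)))
      calc _ ≤ _ := Submodule.finrank_mono hle
        _ ≤ _ := finrank_span_finset_le_card _
        _ ≤ (I1.erase i0).card := Finset.card_image_le
        _ = I1.card - 1 := Finset.card_erase_of_mem hi0
  omega

/-! ### Switching orientations and contractions -/

/-- The set of edges of `G` with both ends in `X`. -/
def inEdges {V : Type*} (G : SimpleGraph V) (X : Finset V) : Set (Sym2 V) :=
  {e | e ∈ G.edgeSet ∧ ∀ v ∈ e, v ∈ X}

lemma mem_inEdges {V : Type*} {G : SimpleGraph V} {X : Finset V} {a b : V} :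
    s(a, b) ∈ inEdges G X ↔ G.Adj a b ∧ a ∈ X ∧ b ∈ X := by
  simp [inEdges]

lemma inEdges_mono {V : Type*} {G : SimpleGraph V} {X Y : Finset V} (h : X ⊆ Y) :
    inEdges G X ⊆ inEdges G Y := fun _ he => ⟨he.1, fun v hv => h (he.2 v hv)⟩

lemma inEdges_two {V : Type*} [Finite V] {G : SimpleGraph V} {X : Finset V} (h : X.card = 2) :
    (inEdges G X).ncard ≤ 1 := by
  classical
  obtain ⟨a, b, hab, rfl⟩ := Finset.card_eq_two.1 h
  rw [Set.ncard_le_one]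
  intro e he f hf
  induction e with
  | h x y =>
    induction f with
    | h u v =>
      rw [mem_inEdges] at he hf
      have := he.1.ne
      have := hf.1.ne
      simp only [Finset.mem_insert, Finset.mem_singleton] at he hf
      rw [Sym2.eq_iff]
      grind

/-- Every orientation of `G` can be switched to an acyclic one. The orientation is encoded by the
signs of an antisymmetric nowhere zero function `o` on adjacent pairs, the switching by the signs of
`s`, nonzero on `S`, and the acyclic orientation by heights `t` that are distinct on `S`. The set `S`
is meant to contain all the ends of edges of `G`; the other elements of `V` are irrelevant. -/
def Realizable {V : Type*} (G : SimpleGraph V) (S : Finset V) : Prop :=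
  ∀ o : V → V → ℝ, (∀ u v, G.Adj u v → o u v ≠ 0 ∧ o v u = -o u v) →
    ∃ t s : V → ℝ, Set.InjOn t S ∧ (∀ v ∈ S, s v ≠ 0) ∧
      ∀ u v, G.Adj u v → 0 < o u v * s u * s v * (t u - t v)

/-- The simple graph obtained from `G` by identifying vertices along `q` and deleting loops. -/
def contr {V : Type*} (G : SimpleGraph V) (q : V → V) : SimpleGraph V where
  Adj a b := a ≠ b ∧ ∃ x y, q x = a ∧ q y = b ∧ G.Adj x y
  symm := ⟨fun _ _ ⟨h, x, y, hx, hy, hxy⟩ => ⟨h.symm, y, x, hy, hx, hxy.symm⟩⟩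
  loopless := ⟨fun _ h => h.1 rfl⟩

open Classical in
/-- The map identifying all the vertices of `K` with `y`. -/
noncomputable def squash {V : Type*} (K : Finset V) (y : V) (x : V) : V := if x ∈ K then y else x

lemma squash_of_mem {V : Type*} {K : Finset V} {y x : V} (h : x ∈ K) : squash K y x = y :=
  if_pos h

lemma squash_of_notMem {V : Type*} {K : Finset V} {y x : V} (h : x ∉ K) : squash K y x = x :=
  if_neg h

/-- A vertex of the contraction other than `y` is an uncontracted vertex. -/
lemma squash_eq {V : Type*} {K : Finset V} {y x a : V} (h : squash K y x = a) (ha : a ≠ y) :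
    x = a ∧ a ∉ K := by
  by_cases hx : x ∈ K
  · rw [squash_of_mem hx] at h; exact absurd h.symm ha
  · rw [squash_of_notMem hx] at h; subst h; exact ⟨rfl, hx⟩

lemma squash_eq_self {V : Type*} {K : Finset V} {y x : V} (hy : y ∈ K)
    (h : squash K y x = y) : x ∈ K := by
  by_cases hx : x ∈ K
  · exact hx
  · rw [squash_of_notMem hx] at h; subst h; exact hy

/-- Contracting a connected set of vertices preserves abstract duals. -/
lemma HasDual.contr {V : Type*} [Finite V] {G : SimpleGraph V} (h : HasDual G.edgeSet)
    {K : Finset V} {y : V} (hy : y ∈ K)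
    (hK : ∀ P ⊆ K, y ∈ P → (∀ a ∈ P, ∀ b ∈ K, G.Adj a b → b ∈ P) → P = K) :
    HasDual (_root_.contr G (squash K y)).edgeSet := by
  classical
  refine h.minor (squash K y) id Set.univ Set.finite_univ
    (fun e he => SimpleGraph.not_isDiag_of_mem_edgeSet _ he) ?_ ?_
  · intro e he
    induction e with
    | h a b =>
      obtain ⟨-, u, v, rfl, rfl, huv⟩ := he
      exact ⟨s(u, v), huv, by simp, by simp⟩
  · intro a _
    by_cases ha : a ∈ K
    · let inner : Set (Sym2 V) := {e | e ∈ G.edgeSet ∧ (∀ v ∈ e, v ∈ (Set.univ : Set V)) ∧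
        (e.map (squash K y)).IsDiag}
      let P : Finset V := K.filter fun a => ∃ F ∈ Finsupp.supported (ZMod 2) (ZMod 2) inner,
        bd V F = Finsupp.single a 1 + Finsupp.single y 1
      have hP : P = K := by
        refine hK P (Finset.filter_subset _ _) ?_ ?_
        · refine Finset.mem_filter.2 ⟨hy, 0, Submodule.zero_mem _, ?_⟩
          rw [← Finsupp.single_add, zmod2_add_self]; simp
        · intro a ha b hb hab
          obtain ⟨haK, F, hF, hFb⟩ := Finset.mem_filter.1 ha
          refine Finset.mem_filter.2 ⟨hb, F + Finsupp.single s(a, b) 1, Submodule.add_mem _ hF ?_, ?_⟩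
          · refine Finsupp.single_mem_supported _ _ ⟨hab, by simp, ?_⟩
            simp [squash_of_mem haK, squash_of_mem hb]
          · rw [map_add, hFb, bd_single]
            have : (Finsupp.single a 1 + Finsupp.single a 1 : V →₀ ZMod 2) = 0 := by
              rw [← Finsupp.single_add, zmod2_add_self]; simp
            calc _ = (Finsupp.single a 1 + Finsupp.single a 1 : V →₀ ZMod 2) +
                  (Finsupp.single b 1 + Finsupp.single y 1) := by abel
              _ = _ := by rw [this, zero_add]
      rw [← hP] at ha
      obtain ⟨haK, F, hF, hFb⟩ := Finset.mem_filter.1 ha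
      exact ⟨F, hF, by rw [hFb, squash_of_mem haK]; rfl⟩
    · refine ⟨0, Submodule.zero_mem _, ?_⟩
      rw [squash_of_notMem ha, id, ← Finsupp.single_add, zmod2_add_self]; simp

/-- Lifting a switching through a contraction: the branch set `K` is spread out at an
infinitesimal scale around the height of the contracted vertex `y`, following `τ`, after
switching it by `b`. The hypothesis `H` makes parallel edges agree after this switching. -/
lemma Realizable.lift {V : Type*} [Finite V] {G : SimpleGraph V} {S K : Finset V} {y : V}
    (hy : y ∈ K) {S' : Finset V}
    (hS' : ∀ v ∈ S, v ∉ K → v ∈ S') (hyS' : y ∈ S')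
    (hr : Realizable (contr G (squash K y)) S')
    (o : V → V → ℝ) (ho : ∀ u v, G.Adj u v → o u v ≠ 0 ∧ o v u = -o u v)
    (τ b : V → ℝ) (hτ : Set.InjOn τ K) (hb : ∀ v ∈ K, b v ≠ 0)
    (hin : ∀ x ∈ K, ∀ x' ∈ K, G.Adj x x' → 0 < o x x' * b x * b x' * (τ x - τ x'))
    (H : ∀ z, z ∉ K → ∀ x ∈ K, ∀ x' ∈ K, G.Adj z x → G.Adj z x' →
      0 < (o z x * b x) * (o z x' * b x')) :
    ∃ t s : V → ℝ, Set.InjOn t S ∧ (∀ v ∈ S, s v ≠ 0) ∧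
      ∀ u v, G.Adj u v → 0 < o u v * s u * s v * (t u - t v) := by
  classical
  have hf : ∃ f : V → ℝ, ∀ z, z ∉ K → ∀ x ∈ K, G.Adj z x → 0 < f z * (o z x * b x) := by
    have : ∀ z, ∃ c : ℝ, z ∉ K → ∀ x ∈ K, G.Adj z x → 0 < c * (o z x * b x) := by
      intro z
      by_cases hz : ∃ x ∈ K, G.Adj z x
      · obtain ⟨x, hx, hzx⟩ := hz
        exact ⟨o z x * b x, fun hzK x' hx' hzx' => H z hzK x hx x' hx' hzx hzx'⟩
      · exact ⟨1, fun _ x hx hzx => absurd ⟨x, hx, hzx⟩ hz⟩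
    choose f hf using this
    exact ⟨f, hf⟩
  obtain ⟨f, hf⟩ := hf
  have hGy : ∀ {z x}, z ∉ K → x ∈ K → G.Adj z x → (contr G (squash K y)).Adj z y := by
    intro z x hz hx hzx
    exact ⟨fun h => hz (h ▸ hy), z, x, squash_of_notMem hz, squash_of_mem hx, hzx⟩
  have hyG : ∀ {z}, (contr G (squash K y)).Adj z y → f z ≠ 0 := by
    rintro z ⟨hne, u, v, hu, hv, huv⟩
    obtain ⟨rfl, hz⟩ := squash_eq hu hne
    have := hf u hz v (squash_eq_self hy hv) huv
    intro h0; rw [h0, zero_mul] at this; exact lt_irrefl _ this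
  let o' : V → V → ℝ := fun a c => if a = y then -f c else if c = y then f a else o a c
  obtain ⟨t', s', ht', hs', hE'⟩ := hr o' (by
    intro u v huv
    have huv' := huv
    obtain ⟨hne, u', v', hu, hv, hadj⟩ := huv
    by_cases h1 : u = y
    · subst h1
      simp only [o', if_true, if_neg hne.symm]
      exact ⟨neg_ne_zero.2 (hyG huv'.symm), by simp⟩
    · by_cases h2 : v = y
      · subst h2
        simp only [o', if_true, if_neg hne]
        exact ⟨hyG huv', trivial⟩
      · simp only [o', if_neg h1, if_neg h2]
        obtain ⟨rfl, -⟩ := squash_eq hu h1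
        obtain ⟨rfl, -⟩ := squash_eq hv h2
        exact ho _ _ hadj)
  have hev : ∀ᶠ ε in nhdsWithin (0 : ℝ) (Set.Ioi 0), ∀ z x : V, t' y ≠ t' z →
      0 < (t' y + ε * τ x - t' z) * (t' y - t' z) := by
    rw [Filter.eventually_all]; intro z
    rw [Filter.eventually_all]; intro x
    by_cases h : t' y = t' z
    · simp [h]
    · have hc : Filter.Tendsto (fun ε : ℝ => (t' y + ε * τ x - t' z) * (t' y - t' z))
          (nhdsWithin 0 (Set.Ioi 0)) (nhds ((t' y + 0 * τ x - t' z) * (t' y - t' z))) := by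
        refine Filter.Tendsto.mono_left (Continuous.tendsto ?_ _) nhdsWithin_le_nhds
        fun_prop
      have hpos : 0 < (t' y + 0 * τ x - t' z) * (t' y - t' z) := by
        rw [zero_mul, add_zero]; exact mul_self_pos.2 (sub_ne_zero.2 h)
      filter_upwards [hc.eventually (lt_mem_nhds hpos)] with ε hε _ using hε
  obtain ⟨ε, hε, hε0⟩ := (hev.and self_mem_nhdsWithin).exists
  have hε0 : 0 < ε := hε0
  have hmix : ∀ z x, z ∉ K → x ∈ K → G.Adj z x →
      0 < o z x * s' z * (s' y * b x) * (t' z - (t' y + ε * τ x)) := by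
    intro z x hz hx hzx
    have h1 := hE' z y (hGy hz hx hzx)
    have hzy : z ≠ y := fun h => hz (h ▸ hy)
    simp only [o', if_neg hzy, if_true] at h1
    have h2 := hf z hz x hx hzx
    have hne : t' y ≠ t' z := by
      intro h; rw [h, sub_self, mul_zero] at h1; exact lt_irrefl _ h1
    have h3 := hε z x hne
    have h4 := mul_pos (mul_pos h1 h2) h3
    have h5 : (0 : ℝ) ≤ (f z * (t' y - t' z)) ^ 2 := sq_nonneg _
    by_contra hcon
    push Not at hcon
    have : f z * s' z * s' y * (t' z - t' y) * (f z * (o z x * b x)) *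
        ((t' y + ε * τ x - t' z) * (t' y - t' z)) = (f z * (t' y - t' z)) ^ 2 *
        (o z x * s' z * (s' y * b x) * (t' z - (t' y + ε * τ x))) := by ring
    rw [this] at h4
    exact absurd h4 (not_lt.2 (mul_nonpos_of_nonneg_of_nonpos h5 hcon))
  have hyt : ∀ z ∈ S, z ∉ K → t' y ≠ t' z := by
    intro z hz hzK h
    exact hzK (ht' hyS' (hS' z hz hzK) h ▸ hy)
  have hne : ∀ z ∈ S, z ∉ K → ∀ x, t' y + ε * τ x ≠ t' z := by
    intro z hz hzK x h
    have := hε z x (hyt z hz hzK)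
    rw [h, sub_self, zero_mul] at this
    exact lt_irrefl _ this
  refine ⟨fun x => if x ∈ K then t' y + ε * τ x else t' x,
    fun x => if x ∈ K then s' y * b x else s' x, ?_, ?_, ?_⟩
  · intro u hu v hv huv
    by_cases h1 : u ∈ K <;> by_cases h2 : v ∈ K <;> simp only [h1, h2, if_true, if_false] at huv
    · refine hτ h1 h2 ?_
      have := add_left_cancel huv
      exact mul_left_cancel₀ hε0.ne' this
    · exact absurd huv (hne v hv h2 u)
    · exact absurd huv.symm (hne u hu h1 v)
    · exact ht' (hS' u hu h1) (hS' v hv h2) huv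
  · intro v hv
    by_cases h1 : v ∈ K <;> simp only [h1, if_true, if_false]
    · exact mul_ne_zero (hs' y hyS') (hb v h1)
    · exact hs' v (hS' v hv h1)
  · intro u v huv
    by_cases h1 : u ∈ K <;> by_cases h2 : v ∈ K <;> simp only [h1, h2, if_true, if_false]
    · have h3 := hin u h1 v h2 huv
      have h4 : 0 < ε * (s' y) ^ 2 := by have := hs' y hyS'; positivity
      calc 0 < (ε * (s' y) ^ 2) * (o u v * b u * b v * (τ u - τ v)) := mul_pos h4 h3
        _ = _ := by ring
    · have h3 := hmix v u h2 h1 huv.symm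
      rw [(ho u v huv).2] at h3
      calc 0 < _ := h3
        _ = _ := by ring
    · exact hmix u v h1 h2 huv
    · have huy : u ≠ y := fun h => h1 (h ▸ hy)
      have hvy : v ≠ y := fun h => h2 (h ▸ hy)
      have h3 := hE' u v ⟨huv.ne, u, v, squash_of_notMem h1, squash_of_notMem h2, huv⟩
      simpa only [o', if_neg huy, if_neg hvy] using h3

/-! ### Sparse graphs: every orientation can be switched to an acyclic one -/

/-- The hypotheses on `G` that are stable under the contractions in the induction: its edges lie
inside `S`, it has an abstract dual, and it is `(2,3)`-sparse. -/
structure Good {V : Type*} (G : SimpleGraph V) (S : Finset V) : Prop where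
  inside : ∀ u v, G.Adj u v → u ∈ S
  dual : HasDual G.edgeSet
  sparse : ∀ X ⊆ S, 2 ≤ X.card → (inEdges G X).ncard + 3 ≤ 2 * X.card

/-- The subgraph of `G` induced on `X`, as a graph on all of `V`. -/
def restr {V : Type*} (G : SimpleGraph V) (X : Finset V) : SimpleGraph V where
  Adj a b := G.Adj a b ∧ a ∈ X ∧ b ∈ X
  symm := ⟨fun _ _ ⟨h, ha, hb⟩ => ⟨h.symm, hb, ha⟩⟩
  loopless := ⟨fun _ h => h.1.ne rfl⟩

lemma restr_edgeSet {V : Type*} (G : SimpleGraph V) (X : Finset V) :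
    (restr G X).edgeSet = inEdges G X := by
  ext e
  induction e with
  | h a b => rw [mem_inEdges]; rfl

lemma Good.restr {V : Type*} [Finite V] {G : SimpleGraph V} {S X : Finset V} (h : Good G S)
    (hX : X ⊆ S) : Good (_root_.restr G X) X where
  inside _ _ huv := huv.2.1
  dual := by
    rw [restr_edgeSet]; exact h.dual.mono fun e he => he.1
  sparse Y hY hc := by
    refine le_trans (Nat.add_le_add_right (Set.ncard_le_ncard ?_) 3) (h.sparse Y (hY.trans hX) hc)
    rintro e ⟨he, hv⟩
    rw [restr_edgeSet] at he
    exact ⟨he.1, hv⟩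

lemma Good.sparse_of_three {V : Type*} [Finite V] {G : SimpleGraph V} {S : Finset V}
    (h : ∀ X ⊆ S, 3 ≤ X.card → (inEdges G X).ncard + 3 ≤ 2 * X.card) :
    ∀ X ⊆ S, 2 ≤ X.card → (inEdges G X).ncard + 3 ≤ 2 * X.card := by
  intro X hX hc
  rcases hc.eq_or_lt with h2 | h3
  · have := inEdges_two (G := G) h2.symm
    omega
  · exact h X hX h3

/-- The induction step when no proper subset of at least three vertices is tight: then, except
on three vertices, there are no triangles, and any edge can be contracted. -/
lemma realizable_of_no_tight {V : Type*} [Finite V] {G : SimpleGraph V} {S : Finset V}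
    (hG : Good G S)
    (hnt : ∀ X ⊂ S, 3 ≤ X.card → (inEdges G X).ncard + 3 < 2 * X.card)
    (ih : ∀ (G' : SimpleGraph V) (S' : Finset V), S'.card < S.card → Good G' S' →
      Realizable G' S') : Realizable G S := by
  classical
  intro o ho
  by_cases hE : ∃ u v, G.Adj u v
  swap
  · push Not at hE
    obtain ⟨n, ⟨e⟩⟩ := Finite.exists_equiv_fin V
    refine ⟨fun v => ((e v : ℕ) : ℝ), fun _ => 1, ?_, fun _ _ => one_ne_zero,
      fun u v huv => absurd huv (hE u v)⟩
    intro a _ b _ hab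
    exact e.injective (Fin.ext (by exact_mod_cast (show ((e a : ℕ) : ℝ) = ((e b : ℕ) : ℝ) from hab)))
  obtain ⟨u, v, huv⟩ := hE
  have huS := hG.inside u v huv
  have hvS := hG.inside v u huv.symm
  have key : (∀ w w', G.Adj u w → G.Adj v w → G.Adj u w' → G.Adj v w' → w = w') ∧
      (3 < S.card → (inEdges G S).ncard + 3 < 2 * S.card) := by
    by_cases h4 : 3 < S.card
    · have htf : ∀ a b c, G.Adj a b → G.Adj b c → G.Adj c a → False := by
        intro a b c hab hbc hca
        have hab' := hab.ne
        have hbc' := hbc.ne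
        have hca' := hca.ne
        have hc3 : ({a, b, c} : Finset V).card = 3 := Finset.card_eq_three.2
          ⟨a, b, c, hab', hca'.symm, hbc', rfl⟩
        have hsub : ({a, b, c} : Finset V) ⊆ S := by
          intro x hx
          simp only [Finset.mem_insert, Finset.mem_singleton] at hx
          rcases hx with rfl | rfl | rfl
          exacts [hG.inside _ _ hab, hG.inside _ _ hbc, hG.inside _ _ hca]
        have h1 := hnt {a, b, c} (Finset.ssubset_iff_subset_ne.2 ⟨hsub, by
          intro h; rw [h] at hc3; omega⟩) hc3.ge
        have h2 : (({s(a, b), s(b, c), s(c, a)} : Finset (Sym2 V)) : Set (Sym2 V)).ncard ≤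
            (inEdges G {a, b, c}).ncard := by
          refine Set.ncard_le_ncard ?_
          intro e he
          simp only [Finset.coe_insert, Finset.coe_singleton, Set.mem_insert_iff,
            Set.mem_singleton_iff] at he
          rcases he with rfl | rfl | rfl <;> rw [mem_inEdges] <;> simp [hab, hbc, hca]
        have h3 : ({s(a, b), s(b, c), s(c, a)} : Finset (Sym2 V)).card = 3 :=
          Finset.card_eq_three.2 ⟨_, _, _, by rw [ne_eq, Sym2.eq_iff]; grind,
            by rw [ne_eq, Sym2.eq_iff]; grind, by rw [ne_eq, Sym2.eq_iff]; grind, rfl⟩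
        rw [Set.ncard_coe_finset, h3] at h2
        omega
      refine ⟨fun w _ h1 h2 _ _ => absurd h2.symm fun h2 => htf u v w huv h2.symm h1.symm,
        fun _ => ?_⟩
      have h1 := edge_bound G S (by omega) hG.inside htf hG.dual
      have h2 : (inEdges G S).ncard ≤ G.edgeSet.ncard := Set.ncard_le_ncard fun e he => he.1
      omega
    · refine ⟨fun w w' h1 h2 h3 h4' => ?_, fun h => absurd h h4⟩
      by_contra hww
      apply h4
      have hsub : ({u, v, w, w'} : Finset V) ⊆ S := by
        intro x hx
        simp only [Finset.mem_insert, Finset.mem_singleton] at hx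
        rcases hx with rfl | rfl | rfl | rfl
        exacts [huS, hvS, hG.inside _ _ h1.symm, hG.inside _ _ h3.symm]
      refine lt_of_lt_of_le ?_ (Finset.card_le_card hsub)
      have := huv.ne
      have := h1.ne
      have := h2.ne
      have := h3.ne
      have := h4'.ne
      rw [Finset.card_insert_of_notMem, Finset.card_insert_of_notMem,
        Finset.card_insert_of_notMem, Finset.card_singleton]
      · norm_num
      all_goals (simp only [Finset.mem_insert, Finset.mem_singleton]; grind)
  obtain ⟨hcom, hSnt⟩ := key
  have huK : u ∈ ({u, v} : Finset V) := by simp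
  have hvK : v ∈ ({u, v} : Finset V) := by simp
  have hGood : Good (contr G (squash {u, v} u)) (S.erase v) := by
    refine ⟨?_, hG.dual.contr huK ?_, Good.sparse_of_three ?_⟩
    · rintro a b ⟨-, x, y, rfl, -, hxy⟩
      by_cases hx : x ∈ ({u, v} : Finset V)
      · rw [squash_of_mem hx]; exact Finset.mem_erase.2 ⟨huv.ne, huS⟩
      · rw [squash_of_notMem hx]
        refine Finset.mem_erase.2 ⟨fun h => hx (h ▸ hvK), hG.inside _ _ hxy⟩
    · intro P hP huP hcl
      refine Finset.Subset.antisymm hP ?_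
      have := hcl u huP v hvK huv
      intro x hx
      simp only [Finset.mem_insert, Finset.mem_singleton] at hx
      rcases hx with rfl | rfl <;> assumption
    · intro Y hY hYc
      have hvY : v ∉ Y := fun h => (Finset.mem_erase.1 (hY h)).1 rfl
      have hYS : Y ⊆ S := hY.trans (Finset.erase_subset _ _)
      by_cases huY : u ∈ Y
      · have hc : (insert v Y).card = Y.card + 1 := Finset.card_insert_of_notMem hvY
        have hsub : inEdges (contr G (squash {u, v} u)) Y ⊆
            Sym2.map (squash {u, v} u) '' (inEdges G (insert v Y) \ {s(u, v)}) := by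
          intro e he
          induction e with
          | h a b =>
            obtain ⟨⟨hne, x, y, rfl, rfl, hxy⟩, ha, hb⟩ := mem_inEdges.1 he
            have hmem : ∀ z, squash {u, v} u z ∈ Y → z ∈ insert v Y := by
              intro z hz
              by_cases hzK : z ∈ ({u, v} : Finset V)
              · simp only [Finset.mem_insert, Finset.mem_singleton] at hzK ⊢
                rcases hzK with rfl | rfl <;> simp [huY]
              · rw [squash_of_notMem hzK] at hz; exact Finset.mem_insert_of_mem hz
            refine ⟨s(x, y), ⟨mem_inEdges.2 ⟨hxy, hmem x ha, hmem y hb⟩, ?_⟩, by simp⟩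
            intro h
            rw [Set.mem_singleton_iff, Sym2.eq_iff] at h
            apply hne
            rcases h with ⟨rfl, rfl⟩ | ⟨rfl, rfl⟩
            · rw [squash_of_mem huK, squash_of_mem hvK]
            · rw [squash_of_mem huK, squash_of_mem hvK]
        have h1 : (inEdges (contr G (squash {u, v} u)) Y).ncard ≤
            (inEdges G (insert v Y)).ncard - 1 := by
          refine le_trans (Set.ncard_le_ncard hsub) (le_trans (Set.ncard_image_le) ?_)
          rw [Set.ncard_sdiff_singleton_of_mem]
          exact mem_inEdges.2 ⟨huv, by simp [huY], by simp⟩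
        have h2 : (inEdges G (insert v Y)).ncard + 3 < 2 * (insert v Y).card := by
          have hss : insert v Y ⊆ S := Finset.insert_subset hvS hYS
          rcases hss.eq_or_ssubset with h | h
          · rw [h]; apply hSnt; rw [← h, hc]; omega
          · exact hnt _ h (by omega)
        omega
      · refine le_trans (Nat.add_le_add_right (Set.ncard_le_ncard ?_) 3)
          (hG.sparse Y hYS (by omega))
        intro e he
        induction e with
        | h a b =>
          obtain ⟨⟨hne, x, y, hx, hy, hxy⟩, ha, hb⟩ := mem_inEdges.1 he
          obtain ⟨rfl, -⟩ := squash_eq hx (fun h => huY (h ▸ ha))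
          obtain ⟨rfl, -⟩ := squash_eq hy (fun h => huY (h ▸ hb))
          exact mem_inEdges.2 ⟨hxy, ha, hb⟩
  -- the switching at `v` that makes the two edges to a common neighbour parallel
  obtain ⟨β, hβ0, hβ⟩ : ∃ β : ℝ, β ≠ 0 ∧ ∀ w, G.Adj w u → G.Adj w v → 0 < o w u * (o w v * β) := by
    by_cases hw : ∃ w, G.Adj w u ∧ G.Adj w v
    · obtain ⟨w, h1, h2⟩ := hw
      have h1' := (ho w u h1).1
      have h2' := (ho w v h2).1
      refine ⟨o w u * o w v, mul_ne_zero h1' h2', fun w' h3 h4 => ?_⟩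
      obtain rfl := hcom w w' h1.symm h2.symm h3.symm h4.symm
      have : o w u * (o w v * (o w u * o w v)) = (o w u * o w v) ^ 2 := by ring
      rw [this]; positivity
    · exact ⟨1, one_ne_zero, fun w h1 h2 => absurd ⟨w, h1, h2⟩ hw⟩
  have huv0 := (ho u v huv).1
  have hvu := (ho u v huv).2
  have hsv : squash {u, v} u u = u := squash_of_mem huK
  have hvu' : v ≠ u := huv.ne.symm
  have hsq : 0 < (o u v * β) ^ 2 := by positivity
  refine Realizable.lift (y := u) huK (S' := S.erase v) ?_ ?_ (ih _ _ ?_ hGood) o ho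
    (fun x => if x = v then -(o u v * β) else 0) (fun x => if x = v then β else 1) ?_ ?_ ?_ ?_
  · intro z hz hzK
    exact Finset.mem_erase.2 ⟨fun h => hzK (h ▸ hvK), hz⟩
  · exact Finset.mem_erase.2 ⟨huv.ne, huS⟩
  · exact Finset.card_lt_card (Finset.erase_ssubset hvS)
  · intro a ha b hb hab
    simp only [Finset.coe_insert, Finset.coe_singleton, Set.mem_insert_iff,
      Set.mem_singleton_iff] at ha hb
    have : o u v * β ≠ 0 := mul_ne_zero huv0 hβ0
    rcases ha with rfl | rfl <;> rcases hb with rfl | rfl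
    · rfl
    · simp only [if_neg huv.ne, if_true] at hab
      exact absurd hab.symm (neg_ne_zero.2 this)
    · simp only [if_neg huv.ne, if_true] at hab
      exact absurd hab (neg_ne_zero.2 this)
    · rfl
  · intro x _
    by_cases hx : x = v <;> simp [hx, hβ0]
  · intro a ha b hb hab
    simp only [Finset.mem_insert, Finset.mem_singleton] at ha hb
    rcases ha with rfl | rfl <;> rcases hb with rfl | rfl
    · exact absurd rfl hab.ne
    · simp only [if_neg huv.ne, if_true]
      calc 0 < _ := hsq
        _ = _ := by ring
    · simp only [if_neg huv.ne, if_true, hvu]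
      calc 0 < _ := hsq
        _ = _ := by ring
    · exact absurd rfl hab.ne
  · intro z hzK a ha b hb haz hbz
    simp only [Finset.mem_insert, Finset.mem_singleton] at ha hb
    rcases ha with rfl | rfl <;> rcases hb with rfl | rfl
    · simp only [if_neg huv.ne, mul_one]
      exact mul_self_pos.2 (ho _ _ haz).1
    · simp only [if_neg huv.ne, if_true, mul_one]
      exact hβ z haz hbz
    · simp only [if_neg huv.ne, if_true, mul_one]
      have := hβ z hbz haz
      linarith
    · simp only [if_true]
      exact mul_self_pos.2 (mul_ne_zero (ho _ _ haz).1 hβ0)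

/-- If `X` is tight then `X` minus a vertex induces a connected graph. -/
lemma tight_connected {V : Type*} [Finite V] [DecidableEq V] {G : SimpleGraph V} {S X : Finset V}
    (hG : Good G S) (hXS : X ⊆ S) (hXt : 2 * X.card ≤ (inEdges G X).ncard + 3)
    {x₀ y : V} (hx₀ : x₀ ∈ X) :
    ∀ P ⊆ X.erase x₀, y ∈ P → (∀ a ∈ P, ∀ b ∈ X.erase x₀, G.Adj a b → b ∈ P) →
      P = X.erase x₀ := by
  set K := X.erase x₀ with hK
  have hKc : K.card = X.card - 1 := Finset.card_erase_of_mem hx₀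
  have hx₀K : x₀ ∉ K := fun h => (Finset.mem_erase.1 h).1 rfl
  have hKX : K ⊆ X := Finset.erase_subset _ _
  have hXK : ∀ x ∈ X, x ≠ x₀ → x ∈ K := fun x hx hne => Finset.mem_erase.2 ⟨hne, hx⟩
  intro P hP hyP hcl
  by_contra hne
  have hQ : (K \ P).Nonempty := by
    rw [Finset.sdiff_nonempty]
    exact fun h => hne (Finset.Subset.antisymm hP h)
  have hQc : (K \ P).card = K.card - P.card := Finset.card_sdiff_of_subset hP
  have hPc : 1 ≤ P.card := Finset.card_pos.2 ⟨y, hyP⟩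
  have hQc' : 1 ≤ (K \ P).card := Finset.card_pos.2 hQ
  have h1c : (insert x₀ P).card = P.card + 1 :=
    Finset.card_insert_of_notMem fun h => hx₀K (hP h)
  have h2c : (insert x₀ (K \ P)).card = (K \ P).card + 1 :=
    Finset.card_insert_of_notMem fun h => hx₀K (Finset.mem_sdiff.1 h).1
  have h1 := hG.sparse (insert x₀ P)
    ((Finset.insert_subset hx₀ (hP.trans hKX)).trans hXS) (by omega)
  have h2 := hG.sparse (insert x₀ (K \ P))
    ((Finset.insert_subset hx₀ (Finset.sdiff_subset.trans hKX)).trans hXS) (by omega)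
  have hsub : inEdges G X ⊆ inEdges G (insert x₀ P) ∪ inEdges G (insert x₀ (K \ P)) := by
    intro e he
    induction e with
    | h a b =>
      rw [mem_inEdges] at he
      rw [Set.mem_union, mem_inEdges, mem_inEdges]
      simp only [Finset.mem_insert, Finset.mem_sdiff]
      have ha := hXK a he.2.1
      have hb := hXK b he.2.2
      have h3 := fun h h' => hcl a h b h' he.1
      have h4 := fun h h' => hcl b h a h' he.1.symm
      have h5 := he.1
      tauto
  have h3 := (Set.ncard_le_ncard hsub).trans (Set.ncard_union_le _ _)
  omega

/-- Contracting all but one vertex `x₀` of a maximal tight set `X` preserves the hypotheses of the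
induction, provided that `x₀` has a neighbour outside `X` whenever some vertex of `X` has one. -/
lemma tight_contr {V : Type*} [Finite V] [DecidableEq V] {G : SimpleGraph V} {S X : Finset V}
    (hG : Good G S) (hXS : X ⊆ S) (hXt : 2 * X.card ≤ (inEdges G X).ncard + 3)
    (hmax : ∀ Z ⊂ S, X ⊂ Z → (inEdges G Z).ncard + 3 < 2 * Z.card)
    {x₀ y : V} (hx₀ : x₀ ∈ X) (hy : y ∈ X.erase x₀)
    (hout : ∀ x ∈ X, ∀ z, z ∉ X → G.Adj x z → ∃ z', z' ∉ X ∧ G.Adj x₀ z') :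
    Good (contr G (squash (X.erase x₀) y)) (insert y (S \ X.erase x₀)) := by
  have hconn := tight_connected hG hXS hXt (y := y) hx₀
  set K := X.erase x₀ with hK
  have hyX : y ∈ X := (Finset.mem_erase.1 hy).2
  have hyx₀ : y ≠ x₀ := (Finset.mem_erase.1 hy).1
  have hx₀K : x₀ ∉ K := fun h => (Finset.mem_erase.1 h).1 rfl
  have hKX : K ⊆ X := Finset.erase_subset _ _
  have hXK : ∀ x ∈ X, x ≠ x₀ → x ∈ K := fun x hx hne => Finset.mem_erase.2 ⟨hne, hx⟩
  set q := squash K y with hq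
  refine ⟨?_, hG.dual.contr hy hconn, Good.sparse_of_three ?_⟩
  · rintro a b ⟨-, x, x', rfl, -, hxx⟩
    by_cases hx : x ∈ K
    · rw [hq, squash_of_mem hx]; exact Finset.mem_insert_self _ _
    · rw [hq, squash_of_notMem hx]
      exact Finset.mem_insert_of_mem (Finset.mem_sdiff.2 ⟨hG.inside _ _ hxx, hx⟩)
  · intro Y hY hYc
    have hYK : ∀ a ∈ Y, a ≠ y → a ∉ K ∧ a ∈ S := by
      intro a ha hne
      rcases Finset.mem_insert.1 (hY ha) with h | h
      · exact absurd h hne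
      · exact ⟨(Finset.mem_sdiff.1 h).2, (Finset.mem_sdiff.1 h).1⟩
    have hYS : Y ⊆ S := by
      intro a ha
      by_cases hne : a = y
      · rw [hne]; exact hXS hyX
      · exact (hYK a ha hne).2
    by_cases hyY : y ∈ Y
    swap
    · refine le_trans (Nat.add_le_add_right (Set.ncard_le_ncard ?_) 3)
        (hG.sparse Y hYS (by omega))
      intro e he
      induction e with
      | h a b =>
        obtain ⟨⟨hne, x, y, hx, hy, hxy⟩, ha, hb⟩ := mem_inEdges.1 he
        obtain ⟨rfl, -⟩ := squash_eq hx (fun h => hyY (h ▸ ha))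
        obtain ⟨rfl, -⟩ := squash_eq hy (fun h => hyY (h ▸ hb))
        exact mem_inEdges.2 ⟨hxy, ha, hb⟩
    have hZS : Y ∪ X ⊆ S := Finset.union_subset hYS hXS
    have hmemZ : ∀ z, q z ∈ Y → z ∈ Y ∪ X := by
      intro z hz
      by_cases hzK : z ∈ K
      · exact Finset.mem_union_right _ (hKX hzK)
      · rw [hq, squash_of_notMem hzK] at hz; exact Finset.mem_union_left _ hz
    have hdiff : (inEdges G (Y ∪ X) \ inEdges G X).ncard =
        (inEdges G (Y ∪ X)).ncard - (inEdges G X).ncard :=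
      Set.ncard_sdiff (inEdges_mono Finset.subset_union_right) (Set.toFinite _)
    have hcard := Finset.card_union_add_card_inter Y X
    have hZ := hG.sparse (Y ∪ X) hZS
      (le_trans (by omega) (Finset.card_le_card Finset.subset_union_left))
    by_cases hx₀Y : x₀ ∈ Y
    · have hint : Y ∩ X = {y, x₀} := by
        ext a
        simp only [Finset.mem_inter, Finset.mem_insert, Finset.mem_singleton]
        constructor
        · rintro ⟨haY, haX⟩
          by_contra! hne
          exact (hYK a haY hne.1).1 (hXK a haX hne.2)
        · rintro (rfl | rfl)
          exacts [⟨hyY, hyX⟩, ⟨hx₀Y, hx₀⟩]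
      rw [hint, Finset.card_pair hyx₀] at hcard
      have hsub : inEdges (contr G q) Y ⊆
          insert s(x₀, y) (Sym2.map q '' (inEdges G (Y ∪ X) \ inEdges G X)) := by
        intro e he
        induction e with
        | h a b =>
          obtain ⟨⟨hne, u, v, rfl, rfl, huv⟩, ha, hb⟩ := mem_inEdges.1 he
          by_cases hX' : u ∈ X ∧ v ∈ X
          · left
            by_cases hu : u = x₀ <;> by_cases hv : v = x₀
            · exact absurd (by rw [hu, hv]) hne
            · rw [hq, squash_of_mem (hXK v hX'.2 hv), hu, squash_of_notMem hx₀K]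
            · rw [hq, squash_of_mem (hXK u hX'.1 hu), hv, squash_of_notMem hx₀K, Sym2.eq_swap]
            · exact absurd (by
                rw [hq, squash_of_mem (hXK u hX'.1 hu), squash_of_mem (hXK v hX'.2 hv)]) hne
          · right
            exact ⟨s(u, v), ⟨mem_inEdges.2 ⟨huv, hmemZ u ha, hmemZ v hb⟩,
              fun h => hX' (mem_inEdges.1 h).2⟩, by simp⟩
      have h1 := (Set.ncard_le_ncard hsub).trans ((Set.ncard_insert_le _ _).trans
        (Nat.add_le_add_right Set.ncard_image_le 1))
      omega
    · have hint : Y ∩ X = {y} := by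
        ext a
        simp only [Finset.mem_inter, Finset.mem_singleton]
        constructor
        · rintro ⟨haY, haX⟩
          by_contra! hne
          exact (hYK a haY hne).1 (hXK a haX (fun h => hx₀Y (h ▸ haY)))
        · rintro rfl
          exact ⟨hyY, hyX⟩
      rw [hint, Finset.card_singleton] at hcard
      have hedge : ∀ u v, q u ≠ q v → q u ∈ Y → q v ∈ Y → u ≠ x₀ ∧ v ≠ x₀ ∧ ¬ (u ∈ X ∧ v ∈ X) := by
        intro u v hne hu hv
        have hu0 : u ≠ x₀ := by
          rintro rfl; rw [hq, squash_of_notMem hx₀K] at hu; exact hx₀Y hu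
        have hv0 : v ≠ x₀ := by
          rintro rfl; rw [hq, squash_of_notMem hx₀K] at hv; exact hx₀Y hv
        refine ⟨hu0, hv0, fun h => hne ?_⟩
        rw [hq, squash_of_mem (hXK u h.1 hu0), squash_of_mem (hXK v h.2 hv0)]
      by_cases hcr : ∃ x ∈ X, ∃ z, z ∉ X ∧ G.Adj x z
      swap
      · -- without edges leaving `X`, the vertex `y` is isolated in the contraction
        have h2 := hG.sparse (Y.erase y) ((Finset.erase_subset _ _).trans hYS)
          (by rw [Finset.card_erase_of_mem hyY]; omega)
        rw [Finset.card_erase_of_mem hyY] at h2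
        have hsub : inEdges (contr G q) Y ⊆ inEdges G (Y.erase y) := by
          intro e he
          induction e with
          | h a b =>
            obtain ⟨⟨hne, u, v, rfl, rfl, huv⟩, ha, hb⟩ := mem_inEdges.1 he
            obtain ⟨hu0, hv0, hnot⟩ := hedge u v hne ha hb
            have huX : u ∉ X := fun h => hcr ⟨u, h, v, fun hv => hnot ⟨h, hv⟩, huv⟩
            have hvX : v ∉ X := fun h => hcr ⟨v, h, u, fun hv => hnot ⟨hv, h⟩, huv.symm⟩
            rw [hq, squash_of_notMem (fun h => huX (hKX h))] at *
            rw [squash_of_notMem (fun h => hvX (hKX h))] at *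
            exact mem_inEdges.2 ⟨huv, Finset.mem_erase.2 ⟨fun h => huX (h ▸ hyX), ha⟩,
              Finset.mem_erase.2 ⟨fun h => hvX (h ▸ hyX), hb⟩⟩
        have h1 := Set.ncard_le_ncard hsub
        omega
      obtain ⟨x, hx, z, hz, hxz⟩ := hcr
      obtain ⟨z', hz', hxz'⟩ := hout x hx z hz hxz
      have hsub : inEdges (contr G q) Y ⊆
          Sym2.map q '' ((inEdges G (Y ∪ X) \ inEdges G X) \ {s(x₀, z')}) := by
        intro e he
        induction e with
        | h a b =>
          obtain ⟨⟨hne, u, v, rfl, rfl, huv⟩, ha, hb⟩ := mem_inEdges.1 he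
          obtain ⟨hu0, hv0, hnot⟩ := hedge u v hne ha hb
          refine ⟨s(u, v), ⟨⟨mem_inEdges.2 ⟨huv, hmemZ u ha, hmemZ v hb⟩,
            fun h => hnot (mem_inEdges.1 h).2⟩, ?_⟩, by simp⟩
          rw [Set.mem_singleton_iff, Sym2.eq_iff]
          tauto
      have h1 := (Set.ncard_le_ncard hsub).trans Set.ncard_image_le
      rcases hZS.eq_or_ssubset with h | h
      · have h2 : s(x₀, z') ∈ inEdges G (Y ∪ X) \ inEdges G X :=
          ⟨mem_inEdges.2 ⟨hxz', Finset.mem_union_right _ hx₀,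
            h ▸ hG.inside _ _ hxz'.symm⟩, fun h => hz' (mem_inEdges.1 h).2.2⟩
        have h3 := Set.ncard_sdiff_singleton_of_mem h2
        have h4 : 0 < (inEdges G (Y ∪ X) \ inEdges G X).ncard := (Set.ncard_pos (Set.toFinite _)).2 ⟨_, h2⟩
        omega
      · have h2 : X ⊂ Y ∪ X := by
          refine Finset.ssubset_iff_subset_ne.2 ⟨Finset.subset_union_right, fun h => ?_⟩
          rw [← h] at hcard
          omega
        have h3 := hmax _ h h2
        have h4 : ((inEdges G (Y ∪ X) \ inEdges G X) \ {s(x₀, z')}).ncard ≤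
          (inEdges G (Y ∪ X) \ inEdges G X).ncard := Set.ncard_le_ncard Set.sdiff_subset
        omega

/-- The induction step when some proper subset `X` of at least three vertices is tight: realize
the subgraph induced on `X`, move one vertex `x₀` of it to infinity by a projective
transformation of the heights, and contract the remaining vertices of `X`. -/
lemma realizable_of_tight {V : Type*} [Finite V] {G : SimpleGraph V} {S X : Finset V}
    (hG : Good G S) (hXS : X ⊂ S) (hX3 : 3 ≤ X.card)
    (hXt : 2 * X.card ≤ (inEdges G X).ncard + 3)
    (hmax : ∀ Z ⊂ S, X ⊂ Z → (inEdges G Z).ncard + 3 < 2 * Z.card)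
    (ih : ∀ (G' : SimpleGraph V) (S' : Finset V), S'.card < S.card → Good G' S' →
      Realizable G' S') : Realizable G S := by
  classical
  intro o ho
  obtain ⟨t₁, s₁, ht₁, hs₁, hE₁⟩ := ih (restr G X) X (Finset.card_lt_card hXS)
    (hG.restr hXS.1) o (fun u v huv => ho u v huv.1)
  -- `x₀` is chosen to have a neighbour outside `X`, unless no vertex of `X` has one
  obtain ⟨x₀, hx₀, hout⟩ : ∃ x₀ ∈ X, ∀ x ∈ X, ∀ z, z ∉ X → G.Adj x z →
      ∃ z', z' ∉ X ∧ G.Adj x₀ z' := by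
    by_cases h : ∃ x ∈ X, ∃ z, z ∉ X ∧ G.Adj x z
    · obtain ⟨x, hx, z, hz, hxz⟩ := h
      exact ⟨x, hx, fun _ _ _ _ _ => ⟨z, hz, hxz⟩⟩
    · obtain ⟨x, hx⟩ : X.Nonempty := Finset.card_pos.1 (by omega)
      exact ⟨x, hx, fun x' hx' z hz hxz => absurd ⟨x', hx', z, hz, hxz⟩ h⟩
  set K := X.erase x₀ with hK
  have hKc : K.card = X.card - 1 := Finset.card_erase_of_mem hx₀
  obtain ⟨y, hy⟩ : K.Nonempty := Finset.card_pos.1 (by omega)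
  have hx₀K : x₀ ∉ K := fun h => (Finset.mem_erase.1 h).1 rfl
  have hKX : K ⊆ X := Finset.erase_subset _ _
  have hXK : ∀ x ∈ X, x ≠ x₀ → x ∈ K := fun x hx hne => Finset.mem_erase.2 ⟨hne, hx⟩
  have hGood : Good (contr G (squash K y)) (insert y (S \ K)) :=
    tight_contr hG hXS.1 hXt hmax hx₀ hy hout
  have hd : ∀ x ∈ K, t₁ x - t₁ x₀ ≠ 0 := by
    intro x hx h
    have := ht₁ (hKX hx) hx₀ (sub_eq_zero.1 h)
    exact hx₀K (this ▸ hx)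
  have hs₀ := hs₁ x₀ hx₀
  have hScard : (insert y (S \ K)).card < S.card := by
    have h1 := Finset.card_insert_le y (S \ K)
    have h2 := Finset.card_sdiff_of_subset (hKX.trans hXS.1)
    have h3 := Finset.card_le_card (hKX.trans hXS.1)
    omega
  -- In the heights `-1 / (t₁ x - t₁ x₀)` the vertex `x₀` lies at infinity. Switching each `x ∈ K`
  -- in addition according to its side of `x₀` keeps the orientation inside `K` and makes the edges
  -- between `x₀` and `K` parallel.
  refine Realizable.lift hy (S' := insert y (S \ K)) ?_ (Finset.mem_insert_self _ _)
    (ih _ _ hScard hGood) o ho (fun x => -(t₁ x - t₁ x₀)⁻¹)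
    (fun x => -s₁ x₀ * s₁ x * (t₁ x - t₁ x₀)) ?_ ?_ ?_ ?_
  · exact fun v hv hvK => Finset.mem_insert_of_mem (Finset.mem_sdiff.2 ⟨hv, hvK⟩)
  · intro a ha b hb hab
    have h1 := inv_injective (neg_injective hab)
    exact ht₁ (hKX ha) (hKX hb) (sub_left_injective h1)
  · intro x hx
    exact mul_ne_zero (mul_ne_zero (neg_ne_zero.2 hs₀) (hs₁ x (hKX hx))) (hd x hx)
  · intro x hx x' hx' hadj
    have h1 := hE₁ x x' ⟨hadj, hKX hx, hKX hx'⟩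
    have h2 := hd x hx
    have h3 := hd x' hx'
    have h4 : 0 < (s₁ x₀) ^ 2 := by positivity
    calc 0 < (s₁ x₀) ^ 2 * (o x x' * s₁ x * s₁ x' * (t₁ x - t₁ x')) := mul_pos h4 h1
      _ = _ := by field_simp; ring
  · intro z hzK x hx x' hx' hzx hzx'
    have hself : ∀ x ∈ K, G.Adj z x → o z x * (-s₁ x₀ * s₁ x * (t₁ x - t₁ x₀)) ≠ 0 :=
      fun x hx hzx => mul_ne_zero (ho _ _ hzx).1
        (mul_ne_zero (mul_ne_zero (neg_ne_zero.2 hs₀) (hs₁ x (hKX hx))) (hd x hx))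
    by_cases hxx : x = x'
    · subst hxx; exact mul_self_pos.2 (hself x hx hzx)
    by_cases hz0 : z = x₀
    · subst hz0
      have h1 := hE₁ z x ⟨hzx, hx₀, hKX hx⟩
      have h2 := hE₁ z x' ⟨hzx', hx₀, hKX hx'⟩
      calc 0 < _ := mul_pos h1 h2
        _ = _ := by ring
    exfalso
    have hzX : z ∉ X := fun h => hzK (hXK z h hz0)
    have hc : (insert z X).card = X.card + 1 := Finset.card_insert_of_notMem hzX
    have hsub' : insert z X ⊆ S := Finset.insert_subset (hG.inside _ _ hzx) hXS.1
    have hsp := hG.sparse _ hsub' (by omega)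
    -- every neighbour of `z` in `X` contributes an edge
    have hcount : ∀ T : Finset V, (∀ a ∈ T, a ∈ X ∧ G.Adj z a) →
        (inEdges G X).ncard + T.card ≤ (inEdges G (insert z X)).ncard := by
      intro T hT
      have hinj : Function.Injective (fun a => s(z, a)) := fun a b h => Sym2.congr_right.1 h
      have h1 : ((fun a => s(z, a)) '' (T : Set V)).ncard = T.card := by
        rw [Set.ncard_image_of_injective _ hinj, Set.ncard_coe_finset]
      rw [← h1, ← Set.ncard_union_eq]
      · refine Set.ncard_le_ncard (Set.union_subset (inEdges_mono (Finset.subset_insert _ _)) ?_)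
        rintro _ ⟨a, ha, rfl⟩
        exact mem_inEdges.2 ⟨(hT a ha).2, Finset.mem_insert_self _ _,
          Finset.mem_insert_of_mem (hT a ha).1⟩
      · rw [Set.disjoint_left]
        rintro _ h ⟨a, ha, rfl⟩
        exact hzX (mem_inEdges.1 h).2.1
    have h2 := hcount {x, x'} (by
      intro a ha
      simp only [Finset.mem_insert, Finset.mem_singleton] at ha
      rcases ha with rfl | rfl
      exacts [⟨hKX hx, hzx⟩, ⟨hKX hx', hzx'⟩])
    rw [Finset.card_pair hxx] at h2
    rcases hsub'.eq_or_ssubset with h | h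
    · obtain ⟨z', hz', hxz'⟩ := hout x (hKX hx) z hzX hzx.symm
      have hzz : z' = z := by
        have := hG.inside _ _ hxz'.symm
        rw [← h] at this
        exact (Finset.mem_insert.1 this).resolve_right hz'
      subst hzz
      have h3 := hcount {x, x', x₀} (by
        intro a ha
        simp only [Finset.mem_insert, Finset.mem_singleton] at ha
        rcases ha with rfl | rfl | rfl
        exacts [⟨hKX hx, hzx⟩, ⟨hKX hx', hzx'⟩, ⟨hx₀, hxz'.symm⟩])
      have h4 : ({x, x', x₀} : Finset V).card = 3 := Finset.card_eq_three.2
        ⟨x, x', x₀, hxx, fun h => hx₀K (h ▸ hx), fun h => hx₀K (h ▸ hx'), rfl⟩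
      omega
    · have := hmax _ h (Finset.ssubset_insert hzX)
      omega

/-- Induction on `|S|`, the step depending on whether some proper subset of at least three vertices
is tight, that is, has `2 |X| - 3` edges; if so, a largest one is contracted. -/
theorem Good.realizable {V : Type*} [Finite V] (G : SimpleGraph V) (S : Finset V)
    (hG : Good G S) : Realizable G S := by
  classical
  have main : ∀ n : ℕ, ∀ (G : SimpleGraph V) (S : Finset V), S.card = n → Good G S →
      Realizable G S := by
    intro n
    induction n using Nat.strong_induction_on with
    | _ n ih =>
      intro G S hn hG
      have ih' : ∀ (G' : SimpleGraph V) (S' : Finset V), S'.card < S.card → Good G' S' →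
          Realizable G' S' := fun G' S' hlt hG' => ih _ (hn ▸ hlt) G' S' rfl hG'
      let T := S.powerset.filter fun X => X ≠ S ∧ 3 ≤ X.card ∧
        2 * X.card ≤ (inEdges G X).ncard + 3
      by_cases hT : T.Nonempty
      · obtain ⟨X, hX, hmax⟩ := Finset.exists_max_image T Finset.card hT
        simp only [T, Finset.mem_filter, Finset.mem_powerset] at hX hmax
        refine realizable_of_tight hG (Finset.ssubset_iff_subset_ne.2 ⟨hX.1, hX.2.1⟩)
          hX.2.2.1 hX.2.2.2 (fun Z hZ hXZ => ?_) ih'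
        by_contra hcon
        have hlt := Finset.card_lt_card hXZ
        have := hmax Z ⟨hZ.1, hZ.ne, by omega, by omega⟩
        omega
      · refine realizable_of_no_tight hG (fun X hX h3 => ?_) ih'
        by_contra hcon
        exact hT ⟨X, Finset.mem_filter.2 ⟨Finset.mem_powerset.2 hX.1, hX.ne, h3, by omega⟩⟩
  exact main _ G S rfl hG

/-! ### From switchings to colourings -/

/-- Every subset of at least three vertices spans a triangle-free graph, so that Euler's bound gives
one edge fewer than required. -/
lemma good_of_bipartite {V : Type*} [Fintype V] {G : SimpleGraph V} (hbip : IsBipartiteGraph G)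
    (h : HasDual G.edgeSet) : Good G Finset.univ := by
  obtain ⟨A, hA⟩ := hbip
  refine ⟨fun u _ _ => Finset.mem_univ u, h, Good.sparse_of_three fun X _ hX => ?_⟩
  have h1 := edge_bound (restr G X) X hX (fun _ _ huv => huv.2.1)
    (fun a b c hab hbc hca => by
      have h1 := hA a b hab.1
      have h2 := hA b c hbc.1
      have h3 := hA c a hca.1
      tauto)
    (by rw [restr_edgeSet]; exact h.mono fun e he => he.1)
  rw [restr_edgeSet] at h1
  omega

/-- The integer inequalities behind the colouring. Here `k`, `l` are the ranks of the two heights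
counted from the top, `n = 2 m`, the flags `p`, `q` record which ends are switched, and `x`, `y` are
the resulting positions on a circle with `2 n` points, the second one being rotated by a
quarter turn. -/
lemma circle_ineq {n m k l : ℤ} (hn : n = 2 * m) (hk0 : 0 ≤ k) (hl0 : 0 ≤ l) (hk : k < n)
    (hl : l < n) (p q σ : Bool)
    (hlt : (if (p == q) == σ then k < l else l < k))
    {x y : ℤ} (hx : x = if p then k else k + n)
    (hy : y = if (if q then l else l + n) + m < 2 * n then (if q then l else l + n) + m
      else (if q then l else l + n) + m - 2 * n) :
    if σ then m + 1 ≤ |x - y| ∧ |x - y| ≤ 2 * n - m - 1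
    else |x - y| ≤ m - 1 ∨ 3 * m + 1 ≤ |x - y| := by
  cases p <;> cases q <;> cases σ <;> simp at hlt hx hy ⊢ <;> split_ifs at hy <;>
    rcases abs_cases (x - y) with ⟨h, _⟩ | ⟨h, _⟩ <;> omega

/-- A bipartite signed graph on `n = 2 m` vertices whose associated orientation is switchable to an
acyclic one has a circular colouring with `2 n` equally spaced colours. -/
lemma coloring_of_realizable {V : Type*} [Fintype V] (G : SimpleGraph V) (σ : Sym2 V → Bool) (n : ℕ)
    (hcard : Fintype.card V = n) (heven : Even n)
    (hbip : IsBipartiteGraph G) (hr : Realizable G Finset.univ) :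
    HasCircularColoring G σ (4 - 8 / ((n : ℝ) + 2)) := by
  classical
  obtain ⟨A, hA⟩ := hbip
  obtain ⟨m, hm⟩ := heven
  obtain ⟨t, s, htinj, hs, hE⟩ := hr
    (fun u v => (if u ∈ A then 1 else -1) * (if σ s(u, v) then 1 else -1)) (by
      intro u v huv
      have := hA u v huv
      rw [Sym2.eq_swap (a := v)]
      by_cases hu : u ∈ A
      · have hv : v ∉ A := this.1 hu
        simp only [if_pos hu, if_neg hv]
        split_ifs <;> norm_num
      · have hv : v ∈ A := by tauto
        simp only [if_neg hu, if_pos hv]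
        split_ifs <;> norm_num)
  have htinj' : Function.Injective t := by simpa using htinj
  -- the rank of a vertex, counted from the highest one
  let k : V → ℕ := fun v => (Finset.univ.filter fun u => t v < t u).card
  have hk : ∀ u v, t v < t u → k u < k v := by
    intro u v h
    refine Finset.card_lt_card (Finset.ssubset_iff_subset_ne.2 ⟨fun w hw => ?_, fun he => ?_⟩)
    · simp only [Finset.mem_filter, Finset.mem_univ, true_and] at hw ⊢
      exact h.trans hw
    · have : u ∈ Finset.univ.filter fun w => t v < t w := by simp [h]
      rw [← he] at this
      simp at this
  have hkn : ∀ v, k v < n := by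
    intro v
    rw [← hcard, ← Finset.card_univ]
    exact Finset.card_lt_card (Finset.filter_ssubset.2 ⟨v, Finset.mem_univ v, lt_irrefl _⟩)
  let x : V → ℤ := fun v => if 0 < s v then (k v : ℤ) else k v + n
  let y : V → ℤ := fun v => if v ∈ A then x v else
    if x v + m < 2 * n then x v + m else x v + m - 2 * n
  have hmn : (n : ℤ) = 2 * m := by rw [hm]; push_cast; ring
  have hy : ∀ v, 0 ≤ y v ∧ y v < 2 * n := by
    intro v
    have := hkn v
    simp only [y, x]
    split_ifs <;> omega
  have key : ∀ u v, G.Adj u v → u ∈ A →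
      if σ s(u, v) then (m : ℤ) + 1 ≤ |y u - y v| ∧ |y u - y v| ≤ 2 * n - m - 1
      else |y u - y v| ≤ m - 1 ∨ 3 * m + 1 ≤ |y u - y v| := by
    intro u v huv hu
    have hv : v ∉ A := (hA u v huv).1 hu
    have h1 := hE u v huv
    simp only [if_pos hu, one_mul] at h1
    have hsu := hs u (Finset.mem_univ u)
    have hsv := hs v (Finset.mem_univ v)
    refine circle_ineq (k := k u) (l := k v) hmn (by positivity) (by positivity)
      (by exact_mod_cast hkn u) (by exact_mod_cast hkn v) (decide (0 < s u)) (decide (0 < s v))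
      (σ s(u, v)) ?_ ?_ ?_
    · have hlt : if (decide (0 < s u) == decide (0 < s v)) == σ s(u, v) then t v < t u
          else t u < t v := by
        rcases lt_or_gt_of_ne hsu with h2 | h2 <;> rcases lt_or_gt_of_ne hsv with h3 | h3 <;>
          cases hσ : σ s(u, v) <;> simp [hσ, h2, h3, h2.le, h3.le, not_lt.2] at h1 ⊢
        all_goals
          by_contra hcon
          push Not at hcon
        · have := mul_nonneg (mul_nonneg_of_nonpos_of_nonpos h2.le h3.le) (sub_nonneg.2 hcon)
          nlinarith
        · have := mul_nonneg (mul_nonneg_of_nonpos_of_nonpos h2.le h3.le) (sub_nonneg.2 hcon)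
          nlinarith
        · have := mul_nonneg (mul_nonneg (neg_nonneg.2 h2.le) h3.le) (sub_nonneg.2 hcon)
          nlinarith
        · have := mul_nonneg (mul_nonneg (neg_nonneg.2 h2.le) h3.le) (sub_nonneg.2 hcon)
          nlinarith
        · have := mul_nonneg (mul_nonneg (neg_nonneg.2 h3.le) h2.le) (sub_nonneg.2 hcon)
          nlinarith
        · have := mul_nonneg (mul_nonneg (neg_nonneg.2 h3.le) h2.le) (sub_nonneg.2 hcon)
          nlinarith
        · have := mul_nonneg (mul_nonneg h3.le h2.le) (sub_nonneg.2 hcon)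
          nlinarith
        · have := mul_nonneg (mul_nonneg h3.le h2.le) (sub_nonneg.2 hcon)
          nlinarith
      split_ifs at hlt ⊢
      · exact_mod_cast hk u v hlt
      · exact_mod_cast hk v u hlt
    · simp only [y, x, if_pos hu, decide_eq_true_eq]
    · simp only [y, x, if_neg hv, decide_eq_true_eq]
  have hn0 : (0 : ℝ) < (n : ℝ) + 2 := by positivity
  have hmR : (n : ℝ) = 2 * m := by exact_mod_cast hmn
  set c : ℝ := 2 / ((n : ℝ) + 2) with hc
  have hc0 : 0 < c := by positivity
  have hc1 : c * (m + 1) = 1 := by rw [hc, hmR]; field_simp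
  have hrc : 4 - 8 / ((n : ℝ) + 2) = 4 * m * c := by rw [hc, hmR]; field_simp; ring
  have final : ∀ u v, G.Adj u v → u ∈ A →
      (if σ s(u, v) then 1 ≤ |c * y u - c * y v| ∧ |c * y u - c * y v| ≤ 4 * m * c - 1
       else |c * y u - c * y v| ≤ 4 * m * c / 2 - 1 ∨ 4 * m * c / 2 + 1 ≤ |c * y u - c * y v|) := by
    intro u v huv hu
    have h1 := key u v huv hu
    have h2 : |c * (y u : ℝ) - c * y v| = c * ((|y u - y v| : ℤ) : ℝ) := by
      rw [← mul_sub, abs_mul, abs_of_pos hc0]; push_cast; rfl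
    rw [h2]
    generalize |y u - y v| = d at h1
    split_ifs at h1 ⊢
    · have h3 : (m : ℝ) + 1 ≤ d := by exact_mod_cast h1.1
      have h4 : (d : ℝ) ≤ 3 * m - 1 := by
        have : d ≤ 3 * m - 1 := by omega
        exact_mod_cast this
      constructor <;> nlinarith
    · rcases h1 with h1 | h1
      · left
        have h4 : (d : ℝ) ≤ m - 1 := by exact_mod_cast h1
        nlinarith
      · right
        have h4 : (3 * m + 1 : ℝ) ≤ d := by exact_mod_cast h1
        nlinarith
  rw [hrc]
  refine ⟨fun v => c * y v, fun v => ⟨?_, ?_⟩, fun u v huv => ?_⟩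
  · have : (0 : ℝ) ≤ y v := by exact_mod_cast (hy v).1
    positivity
  · have : (y v : ℝ) < 4 * m := by
      have : y v < 4 * m := by have := (hy v).2; omega
      exact_mod_cast this
    nlinarith
  · by_cases hu : u ∈ A
    · exact final u v huv hu
    · have hv : v ∈ A := by have := hA u v huv; tauto
      have := final v u huv.symm hv
      rw [abs_sub_comm, Sym2.eq_swap] at this
      exact this

lemma circChrom_le_of_hasDual
    {V : Type*} [Fintype V] (G : SimpleGraph V) (σ : Sym2 V → Bool) (n : ℕ)
    (hcard : Fintype.card V = n) (heven : Even n) (hn : 2 ≤ n)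
    (hbip : IsBipartiteGraph G) (h : HasDual G.edgeSet) :
    circChrom G σ ≤ ENNReal.ofReal (4 - 8 / ((n : ℝ) + 2)) := by
  refine sInf_le ⟨_, ⟨?_, coloring_of_realizable G σ n hcard heven hbip
    (Good.realizable G _ (good_of_bipartite hbip h))⟩, rfl⟩
  have h2 : (2 : ℝ) ≤ n := by exact_mod_cast hn
  have : 8 / ((n : ℝ) + 2) ≤ 2 := by rw [div_le_iff₀ (by linarith)]; linarith
  linarith

/-! ### The grid has an abstract dual -/

/-- The edges of the grid graph on `ℕ × ℕ`. -/
def gridEdges : Set (Sym2 (ℕ × ℕ)) :=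
  {e | ∃ i j : ℕ, e = s((i, j), (i + 1, j)) ∨ e = s((i, j), (i, j + 1))}

/-- The boundary of a chain `x` in the grid at `(i, j)` is the sum of `x` over the up to four edges
there. -/
lemma bd_grid {x : Sym2 (ℕ × ℕ) →₀ ZMod 2}
    (hx : x ∈ Finsupp.supported (ZMod 2) (ZMod 2) gridEdges) (i j : ℕ) :
    bd (ℕ × ℕ) x (i, j) = x s((i, j), (i + 1, j)) + x s((i, j), (i, j + 1)) +
      (if i = 0 then 0 else x s((i - 1, j), (i, j))) +
      (if j = 0 then 0 else x s((i, j - 1), (i, j))) := by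
  rw [Finsupp.supported_eq_span_single] at hx
  induction hx using Submodule.span_induction with
  | mem x h =>
    have hh : ∀ a b i j : ℕ, s((a, b), (a + 1, b)) = s((i, j), (i + 1, j)) ↔ a = i ∧ b = j := by
      intros; simp only [Sym2.eq_iff, Prod.mk.injEq]; omega
    have vv : ∀ a b i j : ℕ, s((a, b), (a, b + 1)) = s((i, j), (i, j + 1)) ↔ a = i ∧ b = j := by
      intros; simp only [Sym2.eq_iff, Prod.mk.injEq]; omega
    have hv : ∀ a b i j : ℕ, s((a, b), (a + 1, b)) = s((i, j), (i, j + 1)) ↔ False := by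
      intros; rw [iff_false, Sym2.eq_iff, Prod.mk.injEq, Prod.mk.injEq, Prod.mk.injEq, Prod.mk.injEq]
      omega
    have vh : ∀ a b i j : ℕ, s((a, b), (a, b + 1)) = s((i, j), (i + 1, j)) ↔ False := by
      intros; rw [iff_false, Sym2.eq_iff, Prod.mk.injEq, Prod.mk.injEq, Prod.mk.injEq, Prod.mk.injEq]
      omega
    obtain ⟨e, ⟨a, b, rfl | rfl⟩, rfl⟩ := h <;> rw [bd_single] <;>
      rcases i with _ | i <;> rcases j with _ | j <;>
      simp only [Finsupp.add_apply, Finsupp.single_apply, hh, vv, hv, vh, Prod.mk.injEq,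
        Nat.add_sub_cancel, if_true, Nat.add_eq_zero_iff, one_ne_zero, and_false, if_false,
        add_zero, zero_add] <;>
      split_ifs <;> first | rfl | (exfalso; omega) | simp_all
  | zero => simp
  | add x y _ _ hx hy =>
    rw [map_add, Finsupp.add_apply, hx, hy]
    simp only [Finsupp.add_apply]
    split_ifs <;> ring
  | smul c x _ hx =>
    rw [map_smul, Finsupp.smul_apply, hx]
    simp only [Finsupp.smul_apply, smul_eq_mul]
    split_ifs <;> ring

/-- The grid has an abstract dual: its faces are the unit squares, the square with lower left corner
`(i, j)` being labelled `(i + 1, j + 1)`, and the outer face `(0, 0)`. -/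
lemma hasDual_grid : HasDual gridEdges := by
  let κ : ℕ × ℕ → ℕ × ℕ := fun p => if p.1 = 0 ∨ p.2 = 0 then (0, 0) else p
  refine ⟨ℕ × ℕ, fun e => κ (e.inf + (1, 1)), fun e => κ e.sup, fun x hx => ?_⟩
  have hlab : (∃ w : ℕ × ℕ → ZMod 2, ∀ e ∈ gridEdges, x e = w (κ (e.inf + (1, 1))) + w (κ e.sup)) ↔
      ∃ w : ℕ × ℕ → ZMod 2, ∀ i j,
        x s((i, j), (i + 1, j)) = w (κ (i + 1, j + 1)) + w (κ (i + 1, j)) ∧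
        x s((i, j), (i, j + 1)) = w (κ (i + 1, j + 1)) + w (κ (i, j + 1)) := by
    refine exists_congr fun w => ⟨fun h i j => ⟨?_, ?_⟩, ?_⟩
    · rw [h _ ⟨i, j, Or.inl rfl⟩]; simp
    · rw [h _ ⟨i, j, Or.inr rfl⟩]; simp
    · rintro h e ⟨i, j, rfl | rfl⟩
      · rw [(h i j).1]; simp
      · rw [(h i j).2]; simp
  rw [hlab]
  constructor
  · intro h0
    let w : ℕ × ℕ → ZMod 2 := fun p =>
      if p.2 = 0 then 0 else ∑ k ∈ Finset.range p.1, x s((k, p.2 - 1), (k, p.2))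
    have hw : ∀ p, w (κ p) = w p := by
      rintro ⟨i, j⟩
      simp only [κ, w]
      by_cases hi : i = 0 <;> by_cases hj : j = 0 <;> simp [hi, hj]
    have hv : ∀ i j, w (i + 1, j + 1) = w (i, j + 1) + x s((i, j), (i, j + 1)) := by
      intro i j
      simp [w, Finset.sum_range_succ]
    refine ⟨w, fun i j => ⟨?_, ?_⟩⟩
    · rw [hw, hw]
      have hb : ∀ i, bd (ℕ × ℕ) x (i, j) = 0 := fun i => by rw [h0]; rfl
      induction i with
      | zero =>
        have h1 := hb 0
        rw [bd_grid hx] at h1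
        rw [hv]
        rcases j with _ | j
        · simp [w] at h1 ⊢
          exact CharTwo.add_eq_zero.1 h1
        · rw [hv]
          simp [w] at h1 ⊢
          rw [add_assoc] at h1
          exact CharTwo.add_eq_zero.1 h1
      | succ i ih =>
        have h1 := hb (i + 1)
        rw [bd_grid hx] at h1
        rw [hv (i + 1) j]
        simp only [Nat.add_sub_cancel, Nat.add_eq_zero_iff, one_ne_zero, and_false, if_false, ih] at h1
        rcases j with _ | j
        · simp only [if_true, add_zero] at h1
          rw [add_assoc] at h1
          rw [CharTwo.add_eq_zero.1 h1]
          simp only [w]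
          simp
          ring
        · rw [hv (i + 1) j]
          simp only [Nat.add_sub_cancel, Nat.add_eq_zero_iff, one_ne_zero, and_false, if_false] at h1
          rw [add_assoc, add_assoc] at h1
          rw [CharTwo.add_eq_zero.1 h1]
          ring
    · rw [hw, hw, hv, add_right_comm, zmod2_add_self, zero_add]
  · rintro ⟨w, hw⟩
    ext ⟨i, j⟩
    rw [bd_grid hx, Finsupp.zero_apply, (hw i j).1, (hw i j).2]
    have h2 : (2 : ZMod 2) = 0 := rfl
    rcases i with _ | i <;> rcases j with _ | j <;>
      simp only [Nat.add_sub_cancel, if_true, Nat.add_eq_zero_iff, one_ne_zero, and_false, if_false,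
        (hw _ _).1, (hw _ _).2]
    · simp [κ]; ring_nf; simp [h2]
    · simp [κ]; ring_nf; simp [h2]
    · simp [κ]; ring_nf; simp [h2]
    · ring_nf; simp [h2]

/-! ### Drawing connected compact sets on a grid -/

/-- A grid step from `a` to a cell `b` of `S`. -/
def GridStep (S : Set (ℕ × ℕ)) (a b : ℕ × ℕ) : Prop := b ∈ S ∧ s(a, b) ∈ gridEdges

/-- `S` is connected as a set of vertices of the grid; the empty set counts as connected. -/
def GridConnected (S : Set (ℕ × ℕ)) : Prop :=
  ∀ a ∈ S, ∀ b ∈ S, Relation.ReflTransGen (GridStep S) a b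

lemma gridStep_symm {S : Set (ℕ × ℕ)} {a b : ℕ × ℕ} (ha : a ∈ S)
    (h : Relation.ReflTransGen (GridStep S) a b) : Relation.ReflTransGen (GridStep S) b a := by
  have : b ∈ S ∧ Relation.ReflTransGen (GridStep S) b a := by
    induction h with
    | refl => exact ⟨ha, .refl⟩
    | tail _ h ih => exact ⟨h.1, .head ⟨ih.1, by rw [Sym2.eq_swap]; exact h.2⟩ ih.2⟩
  exact this.2

/-- The closed unit square with lower left corner `c`. -/
def cell (c : ℕ × ℕ) : Set (ℝ × ℝ) :=
  Set.Icc (c.1 : ℝ) (c.1 + 1) ×ˢ Set.Icc (c.2 : ℝ) (c.2 + 1)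

lemma isClosed_cell (c : ℕ × ℕ) : IsClosed (cell c) := isClosed_Icc.prod isClosed_Icc

lemma locallyFinite_cell : LocallyFinite cell := by
  intro x
  refine ⟨Metric.ball x 1, Metric.ball_mem_nhds x one_pos, ?_⟩
  refine ((Set.finite_Iic ⌊x.1 + 1⌋₊).prod (Set.finite_Iic ⌊x.2 + 1⌋₊)).subset ?_
  rintro ⟨i, j⟩ ⟨y, ⟨⟨h1, -⟩, h2, -⟩, hy⟩
  rw [Metric.mem_ball, Prod.dist_eq, max_lt_iff, Real.dist_eq, Real.dist_eq, abs_lt, abs_lt] at hy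
  simp only at h1 h2
  exact ⟨Nat.le_floor (by linarith [hy.1.2]), Nat.le_floor (by linarith [hy.2.2])⟩

lemma exists_mem_cell {x : ℝ × ℝ} (h1 : 0 ≤ x.1) (h2 : 0 ≤ x.2) : ∃ c, x ∈ cell c :=
  ⟨(⌊x.1⌋₊, ⌊x.2⌋₊), ⟨Nat.floor_le h1, (Nat.lt_floor_add_one _).le⟩,
    Nat.floor_le h2, (Nat.lt_floor_add_one _).le⟩

lemma dist_le_of_mem_cell {x y : ℝ × ℝ} {c : ℕ × ℕ} (hx : x ∈ cell c) (hy : y ∈ cell c) :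
    dist x y ≤ 1 := by
  obtain ⟨⟨h1, h2⟩, h3, h4⟩ := hx
  obtain ⟨⟨h5, h6⟩, h7, h8⟩ := hy
  rw [Prod.dist_eq, max_le_iff, Real.dist_eq, Real.dist_eq, abs_le, abs_le]
  refine ⟨⟨?_, ?_⟩, ?_, ?_⟩ <;> linarith

/-- The cells containing a given point are joined to each other. -/
lemma cell_joined {S : Set (ℕ × ℕ)} {x : ℝ × ℝ} (hS : ∀ c, x ∈ cell c → c ∈ S) {a b : ℕ × ℕ}
    (ha : x ∈ cell a) (hb : x ∈ cell b) : Relation.ReflTransGen (GridStep S) a b := by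
  obtain ⟨a1, a2⟩ := a
  obtain ⟨b1, b2⟩ := b
  have hmid : x ∈ cell (b1, a2) := ⟨hb.1, ha.2⟩
  obtain ⟨⟨h1, h2⟩, h3, h4⟩ := ha
  obtain ⟨⟨h5, h6⟩, h7, h8⟩ := id hb
  simp only at h1 h2 h3 h4 h5 h6 h7 h8
  have k1 : a1 ≤ b1 + 1 := by exact_mod_cast h1.trans h6
  have k2 : b1 ≤ a1 + 1 := by exact_mod_cast h5.trans h2
  have k3 : a2 ≤ b2 + 1 := by exact_mod_cast h3.trans h8
  have k4 : b2 ≤ a2 + 1 := by exact_mod_cast h7.trans h4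
  refine Relation.ReflTransGen.trans (b := (b1, a2)) ?_ ?_
  · rcases (by omega : a1 = b1 ∨ a1 = b1 + 1 ∨ b1 = a1 + 1) with rfl | rfl | rfl
    · exact .refl
    · exact .single ⟨hS _ hmid, b1, a2, Or.inl Sym2.eq_swap⟩
    · exact .single ⟨hS _ hmid, a1, a2, Or.inl rfl⟩
  · rcases (by omega : a2 = b2 ∨ a2 = b2 + 1 ∨ b2 = a2 + 1) with rfl | rfl | rfl
    · exact .refl
    · exact .single ⟨hS _ hb, b1, b2, Or.inr Sym2.eq_swap⟩
    · exact .single ⟨hS _ hb, b1, a2, Or.inr rfl⟩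

/-- The cells met by a connected set form a connected set of grid vertices, because the cells at a
point contain the cells at all nearby points. -/
lemma gridConnected_cells {K : Set (ℝ × ℝ)} (hK : IsPreconnected K)
    (hpos : ∀ x ∈ K, 0 ≤ x.1 ∧ 0 ≤ x.2) : GridConnected {c | (cell c ∩ K).Nonempty} := by
  set S := {c | (cell c ∩ K).Nonempty} with hS
  have hmem : ∀ x ∈ K, ∀ c, x ∈ cell c → c ∈ S := fun x hx c hc => ⟨x, hc, hx⟩
  rintro a ⟨x, hxa, hx⟩ b ⟨y, hyb, hy⟩
  refine hK.induction₂ (fun x y => ∀ a, x ∈ cell a → ∀ b, y ∈ cell b →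
    Relation.ReflTransGen (GridStep S) a b) ?_ ?_ ?_ hx hy a hxa b hyb
  · intro x hx
    filter_upwards [nhdsWithin_le_nhds (locallyFinite_cell.eventually_subset isClosed_cell x)]
      with y hy a ha b hb
    exact cell_joined (hmem x hx) ha (hy hb)
  · intro x y z hx hy hz hxy hyz a ha b hb
    obtain ⟨c, hc⟩ := exists_mem_cell (hpos y hy).1 (hpos y hy).2
    exact (hxy a ha c hc).trans (hyz c hc b hb)
  · intro x y hx hy hxy b hb a ha
    exact gridStep_symm (hmem x hx a ha) (hxy a ha b hb)

/-- Finitely many connected compact sets in the plane can be drawn on a sufficiently fine grid,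
preserving which of them are disjoint. -/
lemma exists_raster {ι : Type*} [Finite ι] (K : ι → Set (ℝ × ℝ)) (hcomp : ∀ i, IsCompact (K i))
    (hconn : ∀ i, IsPreconnected (K i)) :
    ∃ S : ι → Set (ℕ × ℕ), (∀ i, (S i).Finite) ∧ (∀ i, GridConnected (S i)) ∧
      (∀ i j, Disjoint (K i) (K j) → Disjoint (S i) (S j)) ∧
      (∀ i j, (K i ∩ K j).Nonempty → (S i ∩ S j).Nonempty) := by
  obtain ⟨R, hR⟩ := (isCompact_iUnion hcomp).isBounded.subset_closedBall (0 : ℝ × ℝ)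
  have hRK : ∀ i, ∀ x ∈ K i, 0 ≤ x.1 + R ∧ 0 ≤ x.2 + R := by
    intro i x hx
    have := hR (Set.mem_iUnion_of_mem i hx)
    rw [Metric.mem_closedBall, Prod.dist_eq, max_le_iff, Real.dist_eq, Real.dist_eq, abs_le,
      abs_le] at this
    simp only [Prod.fst_zero, Prod.snd_zero] at this
    constructor <;> linarith [this.1.1, this.2.1]
  have hsep : ∀ᶠ N : ℝ in Filter.atTop, ∀ p : ι × ι, Disjoint (K p.1) (K p.2) →
      ∀ x ∈ K p.1, ∀ y ∈ K p.2, 1 < N * dist x y := by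
    rw [Filter.eventually_all]
    rintro ⟨i, j⟩
    by_cases hd : Disjoint (K i) (K j)
    · obtain ⟨δ, hδ, h⟩ := Metric.exists_pos_forall_lt_edist (hcomp i) (hcomp j).isClosed hd
      filter_upwards [Filter.eventually_gt_atTop ((δ : ℝ)⁻¹)] with N hN _ x hx y hy
      have h1 : (δ : ℝ) < dist x y := by
        have := h x hx y hy
        rw [edist_nndist, ENNReal.coe_lt_coe] at this
        exact_mod_cast this
      have h2 : (0 : ℝ) < δ := hδ
      calc (1 : ℝ) = (δ : ℝ)⁻¹ * δ := by field_simp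
        _ < N * dist x y := mul_lt_mul hN h1.le h2 ((inv_pos.2 h2).le.trans hN.le)
    · exact Filter.Eventually.of_forall fun N h => absurd h hd
  obtain ⟨N, hN, hN0⟩ := (hsep.and (Filter.eventually_gt_atTop 0)).exists
  let φ : ℝ × ℝ → ℝ × ℝ := fun x => (N * (x.1 + R), N * (x.2 + R))
  have hφ : Continuous φ := by fun_prop
  have hdist : ∀ x y, dist (φ x) (φ y) = N * dist x y := by
    intro x y
    rw [Prod.dist_eq, Prod.dist_eq, mul_max_of_nonneg _ _ hN0.le]
    congr 1 <;> simp only [φ, Real.dist_eq]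
    · rw [← abs_of_pos hN0, ← abs_mul, abs_of_pos hN0]; congr 1; ring
    · rw [← abs_of_pos hN0, ← abs_mul, abs_of_pos hN0]; congr 1; ring
  have hpos : ∀ i, ∀ x ∈ K i, 0 ≤ (φ x).1 ∧ 0 ≤ (φ x).2 := fun i x hx =>
    ⟨mul_nonneg hN0.le (hRK i x hx).1, mul_nonneg hN0.le (hRK i x hx).2⟩
  refine ⟨fun i => {c | (cell c ∩ φ '' K i).Nonempty}, fun i => ?_, fun i => ?_, ?_, ?_⟩
  · exact locallyFinite_cell.finite_nonempty_inter_compact ((hcomp i).image hφ)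
  · refine gridConnected_cells ((hconn i).image φ hφ.continuousOn) ?_
    rintro _ ⟨x, hx, rfl⟩
    exact hpos i x hx
  · intro i j hd
    rw [Set.disjoint_left]
    rintro c ⟨_, hxc, x, hx, rfl⟩ ⟨_, hyc, y, hy, rfl⟩
    have := dist_le_of_mem_cell hxc hyc
    rw [hdist] at this
    exact absurd (hN (i, j) hd x hx y hy) (not_lt.2 this)
  · rintro i j ⟨x, hi, hj⟩
    obtain ⟨c, hc⟩ := exists_mem_cell (hpos i x hi).1 (hpos i x hi).2
    exact ⟨c, ⟨_, hc, x, hi, rfl⟩, ⟨_, hc, x, hj, rfl⟩⟩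

/-! ### Graphs drawn on the grid -/

/-- A path in the grid is a chain of edges with boundary its two endpoints. -/
lemma exists_chain {S : Set (ℕ × ℕ)} {a b : ℕ × ℕ} (ha : a ∈ S)
    (h : Relation.ReflTransGen (GridStep S) a b) :
    ∃ F ∈ Finsupp.supported (ZMod 2) (ZMod 2) {e | e ∈ gridEdges ∧ ∀ v ∈ e, v ∈ S},
      bd (ℕ × ℕ) F = Finsupp.single b 1 + Finsupp.single a 1 := by
  have : b ∈ S ∧ ∃ F ∈ Finsupp.supported (ZMod 2) (ZMod 2) {e | e ∈ gridEdges ∧ ∀ v ∈ e, v ∈ S},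
      bd (ℕ × ℕ) F = Finsupp.single b 1 + Finsupp.single a 1 := by
    induction h with
    | refl =>
      refine ⟨ha, 0, Submodule.zero_mem _, ?_⟩
      rw [map_zero, ← Finsupp.single_add, zmod2_add_self, Finsupp.single_zero]
    | @tail b c _ h ih =>
      obtain ⟨hb, F, hF, hFb⟩ := ih
      refine ⟨h.1, F + Finsupp.single s(b, c) 1, Submodule.add_mem _ hF
        (Finsupp.single_mem_supported _ _ ⟨h.2, ?_⟩), ?_⟩
      · simp [hb, h.1]
      · rw [map_add, hFb, bd_single, add_comm (Finsupp.single b _), add_assoc,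
          ← add_assoc (Finsupp.single b _), ← Finsupp.single_add, zmod2_add_self,
          Finsupp.single_zero, zero_add, add_comm]
  exact this.2

/-- A path from outside `C` to `C` has a first step into `C`. -/
lemma exists_first_step {S C : Set (ℕ × ℕ)} {a b : ℕ × ℕ} (haC : a ∉ C) (hb : b ∈ C)
    (h : Relation.ReflTransGen (GridStep S) a b) :
    ∃ c d, Relation.ReflTransGen (GridStep (S \ C)) a c ∧ d ∈ C ∧ s(c, d) ∈ gridEdges := by
  by_contra! hcon
  have : Relation.ReflTransGen (GridStep (S \ C)) a b ∧ b ∉ C := by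
    clear hb
    induction h with
    | refl => exact ⟨.refl, haC⟩
    | @tail b c _ h ih =>
      have hc : c ∉ C := fun hc => hcon b c ih.1 hc h.2
      exact ⟨ih.1.tail ⟨⟨h.1, hc⟩, h.2⟩, hc⟩
  exact this.2 hb

/-- A graph drawn on the grid, with connected sets `C v` as vertices and connected sets `N e` as
edges, is a minor of the grid and so has an abstract dual. -/
lemma hasDual_of_drawing {V : Type*} [Finite V] [Nonempty V] {E : Set (Sym2 V)}
    (hE : ∀ e ∈ E, ¬ e.IsDiag) (C : V → Set (ℕ × ℕ)) (N : Sym2 V → Set (ℕ × ℕ))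
    (hCfin : ∀ v, (C v).Finite) (hNfin : ∀ e ∈ E, (N e).Finite)
    (hCne : ∀ v, (C v).Nonempty)
    (hC : ∀ v, GridConnected (C v)) (hN : ∀ e ∈ E, GridConnected (N e))
    (hCC : ∀ u v, u ≠ v → Disjoint (C u) (C v))
    (hNN : ∀ e ∈ E, ∀ f ∈ E, e ≠ f → Disjoint (N e) (N f))
    (hNC : ∀ e ∈ E, ∀ v, v ∉ e → Disjoint (N e) (C v))
    (hNCne : ∀ e ∈ E, ∀ v ∈ e, (N e ∩ C v).Nonempty) : HasDual E := by
  have htail : ∀ e : Sym2 V, ∃ u v, e = s(u, v) := fun e => by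
    induction e with
    | h a b => exact ⟨a, b, rfl⟩
  choose t h hth using htail
  have hte : ∀ e, t e ∈ e := fun e =>
    (congrArg (t e ∈ ·) (hth e)).mpr (Sym2.mem_mk_left _ _)
  have hhe : ∀ e, h e ∈ e := fun e =>
    (congrArg (h e ∈ ·) (hth e)).mpr (Sym2.mem_mk_right _ _)
  have hne : ∀ e ∈ E, t e ≠ h e := fun e he heq => hE e he (by rw [hth e, heq]; simp)
  have hA : ∀ e ∈ E, ∃ a, a ∈ N e ∧ a ∈ C (t e) := fun e he => hNCne e he _ (hte e)
  choose! a haN haC using hA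
  -- `R e` is the part of `N e` that joins the branch set of the tail of `e`; the rest of `N e`
  -- is not needed, apart from the first cell in `C (h e)`.
  let R : Sym2 V → Set (ℕ × ℕ) := fun e =>
    {c | Relation.ReflTransGen (GridStep (N e \ C (h e))) (a e) c}
  have haR : ∀ e, a e ∈ R e := fun e => Relation.ReflTransGen.refl
  have hRsub : ∀ e ∈ E, R e ⊆ N e \ C (h e) := by
    intro e he c hc
    induction hc with
    | refl => exact ⟨haN e he, Set.disjoint_left.1 (hCC _ _ (hne e he)) (haC e he)⟩
    | tail _ h _ => exact h.1
  let B : V → Set (ℕ × ℕ) := fun v => C v ∪ ⋃ e ∈ {e | e ∈ E ∧ t e = v}, R e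
  have hCB : ∀ v, C v ⊆ B v := fun v => Set.subset_union_left
  have hRB : ∀ e ∈ E, R e ⊆ B (t e) := fun e he =>
    (Set.subset_biUnion_of_mem (u := R) (show e ∈ {f | f ∈ E ∧ t f = t e} from ⟨he, rfl⟩)).trans
      Set.subset_union_right
  have hBfin : ∀ v, (B v).Finite := fun v => (hCfin v).union
    ((Set.toFinite _).biUnion fun e he => (hNfin e he.1).subset
      ((hRsub e he.1).trans Set.sdiff_subset))
  have hBB : ∀ u v, u ≠ v → ∀ x ∈ B u, x ∉ B v := by
    have hCR : ∀ u, ∀ e ∈ E, t e ≠ u → ∀ x ∈ C u, x ∉ R e := by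
      intro u e he htu x hx hxR
      have h1 := hRsub e he hxR
      have h2 : u ∈ e := by
        by_contra hue
        exact Set.disjoint_left.1 (hNC e he u hue) h1.1 hx
      rw [hth e, Sym2.mem_iff] at h2
      rcases h2 with rfl | rfl
      · exact htu rfl
      · exact h1.2 hx
    intro u v huv x hxu hxv
    simp only [B, Set.mem_union, Set.mem_iUnion, Set.mem_ofPred_eq, exists_prop] at hxu hxv
    rcases hxu with hxu | ⟨e, ⟨he, rfl⟩, hxe⟩ <;> rcases hxv with hxv | ⟨f, ⟨hf, rfl⟩, hxf⟩
    · exact Set.disjoint_left.1 (hCC u v huv) hxu hxv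
    · exact hCR u f hf huv.symm x hxu hxf
    · exact hCR v e he huv x hxv hxe
    · exact Set.disjoint_left.1 (hNN e he f hf fun hef => huv (by rw [hef]))
        (hRsub e he hxe).1 (hRsub f hf hxf).1
  have hq : ∀ x, ∃ v, ∀ u, x ∈ B u → v = u := by
    intro x
    by_cases hx : ∃ v, x ∈ B v
    · obtain ⟨v, hv⟩ := hx
      exact ⟨v, fun u hu => by_contra fun hne => hBB v u hne x hv hu⟩
    · exact ⟨Classical.arbitrary V, fun u hu => absurd ⟨u, hu⟩ hx⟩
  choose q hq using hq
  choose c hc using hCne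
  refine hasDual_grid.minor q c (⋃ v, B v) (Set.finite_iUnion hBfin) hE ?_ ?_
  · intro e he
    obtain ⟨b, hbN, hbC⟩ := hNCne e he _ (hhe e)
    obtain ⟨x, y, hx, hy, hxy⟩ := exists_first_step (hRsub e he (haR e)).2 hbC
      (hN e he _ (haN e he) _ hbN)
    have hxB := hRB e he hx
    have hyB := hCB _ hy
    refine ⟨s(x, y), hxy, ?_, ?_⟩
    · simp only [Sym2.mem_iff, forall_eq_or_imp, forall_eq]
      exact ⟨Set.mem_iUnion_of_mem _ hxB, Set.mem_iUnion_of_mem _ hyB⟩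
    · rw [Sym2.map_mk, hq x _ hxB, hq y _ hyB, ← hth e]
  · intro x hx
    obtain ⟨v, hxv⟩ := Set.mem_iUnion.1 hx
    rw [hq x v hxv]
    have hmono : ∀ {S T : Set (ℕ × ℕ)} {a b}, S ⊆ T → Relation.ReflTransGen (GridStep S) a b →
        Relation.ReflTransGen (GridStep T) a b := fun hST hab =>
      Relation.ReflTransGen.mono (r := GridStep _) (p := GridStep _)
        (fun _ _ h => ⟨hST h.1, h.2⟩) _ _ hab
    have hpath : Relation.ReflTransGen (GridStep (B v)) (c v) x := by
      rcases id hxv with hxC | hxR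
      · exact hmono (hCB v) (hC v _ (hc v) _ hxC)
      · simp only [Set.mem_iUnion, Set.mem_ofPred_eq, exists_prop] at hxR
        obtain ⟨e, ⟨he, rfl⟩, hxe⟩ := hxR
        refine (hmono (hCB _) (hC _ _ (hc _) _ (haC e he))).trans ?_
        -- every cell on a path that witnesses membership in `R e` itself lies in `R e`
        have : Relation.ReflTransGen (GridStep (R e)) (a e) x := by
          have hxe' : Relation.ReflTransGen (GridStep (N e \ C (h e))) (a e) x := hxe
          clear hxe hxv hx
          induction hxe' with
          | refl => exact .refl
          | tail h1 h2 ih => exact ih.tail ⟨h1.tail h2, h2.2⟩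
        exact hmono (hRB e he) this
    obtain ⟨F, hF, hFb⟩ := exists_chain (hCB v (hc v)) hpath
    refine ⟨F, Finsupp.supported_mono ?_ hF, hFb⟩
    rintro e ⟨he, heB⟩
    refine ⟨he, fun w hw => Set.mem_iUnion_of_mem v (heB w hw), ?_⟩
    induction e with
    | h y z =>
      rw [Sym2.map_mk, Sym2.mk_isDiag_iff, hq y v (heB y (by simp)), hq z v (heB z (by simp))]

/-! ### Plane graphs -/

/-- A plane graph is drawn on a fine grid as follows: a vertex is represented by its point together
with the adjacent thirds of the arcs ending there, an edge by the middle third of its arc. -/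
lemma hasDual_of_isPlanar {V : Type*} [Finite V] [Nonempty V] {G : SimpleGraph V}
    (h : IsPlanar G) : HasDual G.edgeSet := by
  classical
  obtain ⟨p, γ, hp, hγ, hend, hint, hmeet⟩ := h
  let pr : ℝ → unitInterval := Set.projIcc (0 : ℝ) 1 zero_le_one
  have hpr : Continuous pr := continuous_projIcc
  have hpr_val : ∀ t ∈ Set.Icc (0 : ℝ) 1, (pr t : ℝ) = t := fun t ht => by
    simp only [pr, Set.projIcc_of_mem _ ht]
  let g : Sym2 V → ℝ → ℝ × ℝ := fun e t => γ e (pr t)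
  have hg : ∀ e ∈ G.edgeSet, Continuous (g e) := fun e he => (hγ e he).1.comp hpr
  let T : Sym2 V → V → Set ℝ := fun e v =>
    if γ e 0 = p v then Set.Icc 0 (1 / 3) else Set.Icc (2 / 3) 1
  let M : Set ℝ := Set.Icc (1 / 3) (2 / 3)
  have hMI : ∀ t ∈ M, t ∈ Set.Icc (0 : ℝ) 1 := fun t ht => ⟨by linarith [ht.1], by linarith [ht.2]⟩
  have hTI : ∀ e v, ∀ t ∈ T e v, t ∈ Set.Icc (0 : ℝ) 1 := by
    intro e v t ht
    simp only [T] at ht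
    split_ifs at ht
    · exact ⟨ht.1, by linarith [ht.2]⟩
    · exact ⟨by linarith [ht.1], ht.2⟩
  have hends : ∀ e ∈ G.edgeSet, ∀ v ∈ e, γ e 0 ≠ p v → γ e 1 = p v := by
    intro e he v hv h0
    obtain ⟨u, rfl⟩ := hv
    have : p v ∈ ({γ s(v, u) 0, γ s(v, u) 1} : Set (ℝ × ℝ)) := by
      rw [hend v u he]; simp
    rcases this with h1 | h1
    · exact absurd h1.symm h0
    · exact h1.symm
  have hMr : ∀ e ∈ G.edgeSet, ∀ t ∈ M, g e t ∉ Set.range p := by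
    intro e he t ht
    have hv := hpr_val t (hMI t ht)
    refine hint e he _ (fun h0 => ?_) (fun h0 => ?_)
    · rw [h0] at hv; simp only [Set.Icc.coe_zero] at hv; linarith [ht.1]
    · rw [h0] at hv; simp only [Set.Icc.coe_one] at hv; linarith [ht.2]
  -- the only vertex on the third of an arc adjacent to `v` is `v`
  have hTr : ∀ e ∈ G.edgeSet, ∀ v ∈ e, ∀ t ∈ T e v, g e t ∈ Set.range p → g e t = p v := by
    intro e he v hv t ht hr
    have hval := hpr_val t (hTI e v t ht)
    simp only [T] at ht
    have h01 : pr t = 0 ∨ pr t = 1 := by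
      by_contra! hne
      exact hint e he _ hne.1 hne.2 hr
    split_ifs at ht with h0
    · rcases h01 with h | h
      · simp only [g, h, h0]
      · rw [h] at hval; simp only [Set.Icc.coe_one] at hval; linarith [ht.2]
    · rcases h01 with h | h
      · rw [h] at hval; simp only [Set.Icc.coe_zero] at hval; linarith [ht.1]
      · simp only [g, h, hends e he v hv h0]
  have hpT : ∀ e ∈ G.edgeSet, ∀ v ∈ e, p v ∈ g e '' T e v := by
    intro e he v hv
    by_cases h0 : γ e 0 = p v
    · exact ⟨0, by simp [T, h0], by simp [g, pr, h0]⟩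
    · exact ⟨1, by simp only [T, h0, if_false]; norm_num, by simp [g, pr, hends e he v hv h0]⟩
  have hTM : ∀ e v, (T e v ∩ M).Nonempty := by
    intro e v
    by_cases h0 : γ e 0 = p v
    · exact ⟨1 / 3, by simp only [T, h0, if_true]; norm_num, by norm_num [M]⟩
    · exact ⟨2 / 3, by simp only [T, h0, if_false]; norm_num, by norm_num [M]⟩
  have hTT : ∀ e ∈ G.edgeSet, ∀ f ∈ G.edgeSet, ∀ u ∈ e, ∀ v ∈ f, u ≠ v →
      ∀ s ∈ T e u, ∀ t ∈ T f v, g e s ≠ g f t := by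
    intro e he f hf u hu v hv huv s hs t ht heq
    by_cases hef : e = f
    · subst hef
      have h1 : s = t := by
        rw [← hpr_val s (hTI e u s hs), ← hpr_val t (hTI e v t ht), (hγ e he).2 heq]
      subst h1
      simp only [T] at hs ht
      split_ifs at hs ht with hu0 hv0 hv0
      · exact huv (hp (hu0.symm.trans hv0))
      · linarith [hs.2, ht.1]
      · linarith [hs.1, ht.2]
      · exact huv (hp ((hends e he u hu hu0).symm.trans (hends e he v hv hv0)))
    · have hr : g e s ∈ Set.range p := hmeet e he f hf hef _ _ heq
      have h1 := hTr e he u hu s hs hr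
      have h2 := hTr f hf v hv t ht (heq ▸ hr)
      exact huv (hp (by rw [← h1, heq, h2]))
  let B : V → Set (ℝ × ℝ) := fun v =>
    {p v} ∪ ⋃ e : {e // e ∈ G.edgeSet ∧ v ∈ e}, g e.1 '' T e.1 v
  have hTB : ∀ e ∈ G.edgeSet, ∀ v ∈ e, g e '' T e v ⊆ B v := fun e he v hv x hx =>
    Or.inr (Set.mem_iUnion_of_mem (⟨e, he, hv⟩ : {e // e ∈ G.edgeSet ∧ v ∈ e}) hx)
  have hTcomp : ∀ e v, IsCompact (T e v) := fun e v => by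
    simp only [T]; split_ifs <;> exact isCompact_Icc
  have hTconn : ∀ e v, IsPreconnected (T e v) := fun e v => by
    simp only [T]; split_ifs <;> exact isPreconnected_Icc
  let K : V ⊕ G.edgeSet → Set (ℝ × ℝ) := Sum.elim B fun e => g e.1 '' M
  obtain ⟨S, hfin, hconn, hdisj, hne⟩ := exists_raster K (by
      rintro (v | e)
      · exact isCompact_singleton.union (isCompact_iUnion fun e =>
          (hTcomp e.1 v).image (hg e.1 e.2.1))
      · exact isCompact_Icc.image (hg e.1 e.2)) (by
      rintro (v | e)
      · refine isPreconnected_of_forall (p v) fun y hy => ?_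
        rcases hy with hy | hy
        · exact ⟨{p v}, Set.subset_union_left, rfl, hy, isPreconnected_singleton⟩
        · obtain ⟨⟨e, he, hv⟩, hy⟩ := Set.mem_iUnion.1 hy
          exact ⟨_, hTB e he v hv, hpT e he v hv, hy, (hTconn e v).image _ (hg e he).continuousOn⟩
      · exact isPreconnected_Icc.image _ (hg e.1 e.2).continuousOn)
  let N : Sym2 V → Set (ℕ × ℕ) := fun e => if he : e ∈ G.edgeSet then S (Sum.inr ⟨e, he⟩) else ∅
  have hNe : ∀ e (he : e ∈ G.edgeSet), N e = S (Sum.inr ⟨e, he⟩) := fun e he => dif_pos he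
  refine hasDual_of_drawing (fun e he => G.not_isDiag_of_mem_edgeSet he)
    (fun v => S (Sum.inl v)) N (fun v => hfin _) (fun e he => by rw [hNe e he]; exact hfin _)
    (fun v => ?_) (fun v => hconn _) (fun e he => by rw [hNe e he]; exact hconn _)
    (fun u v huv => hdisj _ _ ?_) (fun e he f hf hef => ?_) (fun e he v hv => ?_)
    (fun e he v hv => ?_)
  · exact (hne (Sum.inl v) (Sum.inl v) ⟨p v, Or.inl rfl, Or.inl rfl⟩).left
  · rw [Set.disjoint_left]
    rintro x (rfl | hx) (hy | hy)
    · exact huv (hp hy)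
    · obtain ⟨⟨f, hf, hv⟩, t, ht, hy⟩ := Set.mem_iUnion.1 hy
      exact huv (hp (hy.symm.trans (hTr f hf v hv t ht ⟨u, hy.symm⟩)))
    · obtain ⟨⟨f, hf, hu⟩, t, ht, rfl⟩ := Set.mem_iUnion.1 hx
      exact huv (hp ((hTr f hf u hu t ht ⟨v, hy.symm⟩).symm.trans hy))
    · obtain ⟨⟨e, he, hu⟩, s, hs, rfl⟩ := Set.mem_iUnion.1 hx
      obtain ⟨⟨f, hf, hv⟩, t, ht, hy⟩ := Set.mem_iUnion.1 hy
      exact hTT e he f hf u hu v hv huv s hs t ht hy.symm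
  · rw [hNe e he, hNe f hf]
    refine hdisj _ _ (Set.disjoint_left.2 ?_)
    rintro _ ⟨s, hs, rfl⟩ ⟨t, ht, hst⟩
    exact hMr e he s hs (hmeet e he f hf hef _ _ hst.symm)
  · rw [hNe e he]
    refine hdisj _ _ (Set.disjoint_left.2 ?_)
    rintro _ ⟨s, hs, rfl⟩ (hy | hy)
    · exact hMr e he s hs ⟨v, hy.symm⟩
    · obtain ⟨⟨f, hf, hvf⟩, t, ht, hy⟩ := Set.mem_iUnion.1 hy
      have hef : e ≠ f := fun h => hv (h ▸ hvf)
      exact hMr e he s hs (hmeet e he f hf hef _ _ hy.symm)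
  · rw [hNe e he]
    obtain ⟨t, htT, htM⟩ := hTM e v
    exact hne (Sum.inr ⟨e, he⟩) (Sum.inl v) ⟨g e t, ⟨t, htM, rfl⟩, hTB e he v hv ⟨t, htT, rfl⟩⟩

/-- If `(G, σ)` is a signed bipartite planar simple graph on an even number `n ≥ 2` of
vertices, then `χ_c(G, σ) ≤ 4 - 8/(n+2)`. -/
theorem circChrom_le_of_bipartite_planar_even
    {V : Type*} [Fintype V] (G : SimpleGraph V) (σ : Sym2 V → Bool) (n : ℕ)
    (hcard : Fintype.card V = n) (heven : Even n) (hn : 2 ≤ n)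
    (hbip : IsBipartiteGraph G) (hplanar : IsPlanar G) :
    circChrom G σ ≤ ENNReal.ofReal (4 - 8 / ((n : ℝ) + 2)) := by
  have : Nonempty V := Fintype.card_pos_iff.1 (by omega)
  exact circChrom_le_of_hasDual G σ n hcard heven hn hbip (hasDual_of_isPlanar hplanar)
end

section
/- For every integer i ≥ 2, the signed graph Γ*_i (a signed bipartite planar simple graph on 2i vertices) satisfies χ_c(Γ*_i) = 4 − 4/(i+1). -/
/-!
Read colours as points of a circle of circumference `r`. A positive edge says that its ends are
at circular distance at least `1`, a negative edge that they are at distance at most `r / 2 - 1`,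
so replacing the colour of a vertex by its antipode exchanges the two conditions.

The vertices of `Γ*_{n+2}` form pairs `(2k, 2k+1)`, `k ≤ n`, and both members of the pair `k + 1`
(as well as the single vertex `2n+2`, when `k = n`) are joined to both members of the pair `k`.
Replacing the colour of vertex `1` by its antipode makes the pattern uniform in `k`: edges from `2k`
are positive, edges from `2k+1` are negative, and the subdividing vertex `2n+3` is joined positively
to `0` and to `1`.

*Lower bound.* Let `r < 4` and `t = 2 - r/2 > 0`. The vertex `2n+3` forces the pair `0` to be at
distance at most `r - 2 = 2 - 2t`. If `a, b` are at distance at most `δ ≤ r - 2`, the points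
compatible with a positive edge to `a` and a negative edge to `b` lie in one arc of length `δ - t`
(`arc`). Hence the distance drops by `t` from each pair to the next (`near_step`), and the existence of the
vertex `2n+2` gives `2 - 2t - n t ≥ t`, that is `t ≤ 2 / (n + 3)` (`lower_bound`).

*Upper bound.* For `t = 2 / (n + 3)` all these inequalities can be made equalities, by the colours
`k` for `2k` and `k + (n + 1 - k) t` for `2k+1` modulo `r`, and `-1` for `2n+3` (`gammaColor`).
-/

open scoped ENNReal

/-- Recursive data for the signed graphs `Ω_i` (vertices indexed `0, …, 2i` correspond to
`v_1, …, v_{2i+1}`): a list of signed edges `(a, b, sign)` (`true` = positive), together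
with the two neighbors (and the signs of the corresponding edges) of the last vertex.
`Ω_1` is an all-positive triangle.  `Ω_{i+1}` is obtained from `Ω_i` (whose last vertex
`2i` has neighbor data `(a, sa), (b, sb)`) by adding the vertex `2i+1` as a copy of `2i`
(joined to `a` with sign `sa` and to `b` with sign `sb`) and then a vertex `2i+2` joined
to `2i` by a positive edge and to `2i+1` by a negative edge. -/
def omegaData : ℕ → List (ℕ × ℕ × Bool) × ((ℕ × Bool) × (ℕ × Bool))
  | 0 => ([], ((0, true), (0, true)))
  | 1 => ([(0, 1, true), (0, 2, true), (1, 2, true)], ((0, true), (1, true)))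
  | j + 2 =>
      let d := omegaData (j + 1)
      (d.1 ++ [(d.2.1.1, 2 * j + 3, d.2.1.2), (d.2.2.1, 2 * j + 3, d.2.2.2),
               (2 * j + 2, 2 * j + 4, true), (2 * j + 3, 2 * j + 4, false)],
       ((2 * j + 2, true), (2 * j + 3, false)))

/-- The list of signed edges of `Ω_i`. -/
def omegaList (i : ℕ) : List (ℕ × ℕ × Bool) := (omegaData i).1

/-- The list of signed edges of `Γ*_i`: obtained from `Ω_{i-1}` (on vertices
`0, …, 2i-2`) by subdividing the edge `v_1 v_2 = {0, 1}` once with the new vertex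
`2i-1`, one of the two resulting edges being positive and the other negative. -/
def gammaStarList (i : ℕ) : List (ℕ × ℕ × Bool) :=
  ((omegaList (i - 1)).filter
    (fun t => !((t.1 == 0 && t.2.1 == 1) || (t.1 == 1 && t.2.1 == 0)))) ++
  [(0, 2 * i - 1, true), (1, 2 * i - 1, false)]

/-- The underlying simple graph of `Γ*_i`, on the vertex set `Fin (2i)`. -/
def GammaStarGraph (i : ℕ) : SimpleGraph (Fin (2 * i)) :=
  SimpleGraph.fromRel (fun u v => ∃ b : Bool, ((u : ℕ), (v : ℕ), b) ∈ gammaStarList i)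

/-- The signature of `Γ*_i`: an edge is positive iff it is recorded with sign `true`. -/
def gammaStarSign (i : ℕ) (e : Sym2 (Fin (2 * i))) : Bool :=
  decide (∃ u v : Fin (2 * i), e = s(u, v) ∧ ((u : ℕ), (v : ℕ), true) ∈ gammaStarList i)

/-- The ends of a positive edge: the circular distance modulo `r` of `x` and `y` is at least `1`. -/
def PosRel (r x y : ℝ) : Prop := ∃ m : ℤ, 1 ≤ y - x - m * r ∧ y - x - m * r ≤ r - 1

/-- The circular distance modulo `r` of `x` and `y` is at most `d`. The ends of a negative edge
satisfy this with `d = r / 2 - 1`. -/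
def NearRel (r d x y : ℝ) : Prop := ∃ m : ℤ, -d ≤ y - x - m * r ∧ y - x - m * r ≤ d

/-- The constraint imposed by an edge of sign `s`. -/
def EdgeRel (r : ℝ) (s : Bool) (x y : ℝ) : Prop :=
  if s then PosRel r x y else NearRel r (r / 2 - 1) x y

/-! ### The edges of `Γ*_i` -/

lemma omegaData_snd (n : ℕ) :
    (omegaData (n + 1)).2 = ((2 * n, true), (2 * n + 1, decide (n = 0))) := by
  cases n with
  | zero => rfl
  | succ n => simp [omegaData]; omega

lemma mem_omegaData (n p q : ℕ) (s : Bool) :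
    (p, q, s) ∈ (omegaData (n + 1)).1 ↔
      (p = 0 ∧ q = 1 ∧ s = true) ∨
      ∃ k, ((k ≤ n ∧ q = 2 * k + 2) ∨ (k < n ∧ q = 2 * k + 3)) ∧
        ((p = 2 * k ∧ s = true) ∨ (p = 2 * k + 1 ∧ s = decide (k = 0))) := by
  induction n with
  | zero =>
    simp only [omegaData, List.mem_cons, Prod.mk.injEq, List.not_mem_nil, or_false]
    constructor
    · rintro (h | h | h)
      · exact Or.inl h
      · exact Or.inr ⟨0, by simp; tauto⟩
      · exact Or.inr ⟨0, by simp; tauto⟩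
    · rintro (h | ⟨k, h1, h2⟩)
      · exact Or.inl h
      · have : k = 0 := by omega
        subst this
        simp at h1 h2
        tauto
  | succ n ih =>
    have e : (omegaData (n + 1 + 1)).1 = (omegaData (n + 1)).1 ++
        [(2 * n, 2 * n + 3, true), (2 * n + 1, 2 * n + 3, decide (n = 0)),
          (2 * n + 2, 2 * n + 4, true), (2 * n + 3, 2 * n + 4, false)] := by
      simp [omegaData, omegaData_snd n]
    rw [e, List.mem_append, ih]
    simp only [List.mem_cons, Prod.mk.injEq, List.not_mem_nil, or_false]
    constructor
    · rintro ((h | ⟨k, h1, h2⟩) | h | h | h | h)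
      · exact Or.inl h
      · exact Or.inr ⟨k, by omega, h2⟩
      · exact Or.inr ⟨n, by omega, Or.inl ⟨h.1, h.2.2⟩⟩
      · exact Or.inr ⟨n, by omega, Or.inr ⟨h.1, h.2.2⟩⟩
      · exact Or.inr ⟨n + 1, by omega, Or.inl ⟨by omega, h.2.2⟩⟩
      · exact Or.inr ⟨n + 1, by omega, Or.inr ⟨by omega, by simp [h.2.2]⟩⟩
    · rintro (h | ⟨k, h1, h2⟩)
      · exact Or.inl (Or.inl h)
      · by_cases hk : (k ≤ n ∧ q = 2 * k + 2) ∨ (k < n ∧ q = 2 * k + 3)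
        · exact Or.inl (Or.inr ⟨k, hk, h2⟩)
        · right
          have : (k = n ∧ q = 2 * n + 3) ∨ (k = n + 1 ∧ q = 2 * n + 4) := by omega
          rcases this with ⟨rfl, rfl⟩ | ⟨rfl, rfl⟩
          · rcases h2 with h2 | h2 <;> simp [h2]
          · rcases h2 with h2 | h2 <;> simp [h2] <;> omega

lemma mem_gammaStarList (n p q : ℕ) (s : Bool) :
    (p, q, s) ∈ gammaStarList (n + 2) ↔
      (∃ k, ((k ≤ n ∧ q = 2 * k + 2) ∨ (k < n ∧ q = 2 * k + 3)) ∧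
        ((p = 2 * k ∧ s = true) ∨ (p = 2 * k + 1 ∧ s = decide (k = 0)))) ∨
      (p = 0 ∧ q = 2 * n + 3 ∧ s = true) ∨ (p = 1 ∧ q = 2 * n + 3 ∧ s = false) := by
  have e : n + 2 - 1 = n + 1 := by omega
  have e' : 2 * (n + 2) - 1 = 2 * n + 3 := by omega
  rw [gammaStarList, omegaList, e, e', List.mem_append, List.mem_filter, mem_omegaData]
  simp only [List.mem_cons, Prod.mk.injEq, List.not_mem_nil, or_false]
  refine or_congr ⟨?_, ?_⟩ Iff.rfl
  · rintro ⟨h | h, h'⟩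
    · simp [h.1, h.2.1] at h'
    · exact h
  · rintro ⟨k, h1, h2⟩
    refine ⟨Or.inr ⟨k, h1, h2⟩, ?_⟩
    have : q ≠ 1 ∧ q ≠ 0 := by omega
    simp [this.1, this.2]

lemma gammaStarList_lt {n p q : ℕ} {s : Bool} (h : (p, q, s) ∈ gammaStarList (n + 2)) :
    p < q ∧ q < 2 * (n + 2) := by
  rw [mem_gammaStarList] at h
  rcases h with ⟨k, h1, h2⟩ | h | h <;> omega

lemma gammaStarList_sign {n p q : ℕ} (h : (p, q, true) ∈ gammaStarList (n + 2))
    (h' : (p, q, false) ∈ gammaStarList (n + 2)) : False := by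
  rw [mem_gammaStarList] at h h'
  simp at h h'
  grind

lemma gammaStarSign_eq {n : ℕ} {u v : Fin (2 * (n + 2))} {s : Bool}
    (h : ((u : ℕ), (v : ℕ), s) ∈ gammaStarList (n + 2)) : gammaStarSign (n + 2) s(u, v) = s := by
  cases s with
  | true => simpa [gammaStarSign] using ⟨u, v, Or.inl ⟨rfl, rfl⟩, h⟩
  | false =>
    simp only [gammaStarSign, decide_eq_false_iff_not]
    rintro ⟨u', v', e, h'⟩
    rcases Sym2.eq_iff.1 e with ⟨rfl, rfl⟩ | ⟨rfl, rfl⟩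
    · exact gammaStarList_sign h' h
    · have := gammaStarList_lt h
      have := gammaStarList_lt h'
      omega

/-! ### Colourings as maps to a circle -/

lemma edge_of_coloring {r x y : ℝ} {s : Bool} (hx : 0 ≤ x ∧ x < r) (hy : 0 ≤ y ∧ y < r)
    (h : if s then 1 ≤ |x - y| ∧ |x - y| ≤ r - 1
      else |x - y| ≤ r / 2 - 1 ∨ r / 2 + 1 ≤ |x - y|) : EdgeRel r s x y := by
  cases s with
  | true =>
    simp only [EdgeRel, if_true, PosRel] at h ⊢
    rcases le_total x y with hxy | hxy
    · rw [abs_of_nonpos (by linarith)] at h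
      exact ⟨0, by push_cast; linarith, by push_cast; linarith⟩
    · rw [abs_of_nonneg (by linarith)] at h
      exact ⟨-1, by push_cast; linarith, by push_cast; linarith⟩
  | false =>
    simp only [EdgeRel, Bool.false_eq_true, if_false, NearRel] at h ⊢
    rcases h with h | h
    · rw [abs_le] at h
      exact ⟨0, by push_cast; linarith, by push_cast; linarith⟩
    · rcases le_total x y with hxy | hxy
      · rw [abs_of_nonpos (by linarith)] at h
        exact ⟨1, by push_cast; linarith, by push_cast; linarith⟩
      · rw [abs_of_nonneg (by linarith)] at h
        exact ⟨-1, by push_cast; linarith, by push_cast; linarith⟩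

/-- An integer multiple of `r` lying strictly between `-2r` and `2r` is `-r`, `0` or `r`. -/
lemma int_cases {r : ℝ} (hr : 0 < r) {m : ℤ} (h1 : -(2 * r) < m * r) (h2 : m * r < 2 * r) :
    m = -1 ∨ m = 0 ∨ m = 1 := by
  have a : (m : ℝ) < 2 := lt_of_mul_lt_mul_right h2 hr.le
  have b : (-2 : ℝ) < m := lt_of_mul_lt_mul_right (by linarith) hr.le
  have a' : m < 2 := by exact_mod_cast a
  have b' : -2 < m := by exact_mod_cast b
  omega

lemma coloring_of_edge {r x y : ℝ} {s : Bool} (hr : 2 ≤ r) (hx : 0 ≤ x ∧ x < r)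
    (hy : 0 ≤ y ∧ y < r) (h : EdgeRel r s x y) :
    if s then 1 ≤ |x - y| ∧ |x - y| ≤ r - 1
      else |x - y| ≤ r / 2 - 1 ∨ r / 2 + 1 ≤ |x - y| := by
  rw [abs_sub_comm]
  cases s with
  | true =>
    simp only [EdgeRel, if_true, PosRel] at h ⊢
    obtain ⟨m, h1, h2⟩ := h
    rcases int_cases (m := m) (by linarith : 0 < r) (by linarith) (by linarith) with
      rfl | rfl | rfl <;> push_cast at h1 h2
    · rw [abs_of_nonpos (by linarith)]
      constructor <;> linarith
    · rw [abs_of_nonneg (by linarith)]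
      constructor <;> linarith
    · linarith
  | false =>
    simp only [EdgeRel, Bool.false_eq_true, if_false, NearRel] at h ⊢
    obtain ⟨m, h1, h2⟩ := h
    rcases int_cases (m := m) (by linarith : 0 < r) (by linarith) (by linarith) with
      rfl | rfl | rfl <;> push_cast at h1 h2
    · right
      rw [abs_of_nonpos (by linarith)]
      linarith
    · left
      rw [abs_le]
      constructor <;> linarith
    · right
      rw [abs_of_nonneg (by linarith)]
      linarith

lemma PosRel.shift {r x y : ℝ} (h : PosRel r x y) (i j : ℤ) :
    PosRel r (x - i * r) (y - j * r) := by
  obtain ⟨m, h1, h2⟩ := h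
  exact ⟨m + i - j, by push_cast; linarith, by push_cast; linarith⟩

lemma NearRel.shift {r d x y : ℝ} (h : NearRel r d x y) (i j : ℤ) :
    NearRel r d (x - i * r) (y - j * r) := by
  obtain ⟨m, h1, h2⟩ := h
  exact ⟨m + i - j, by push_cast; linarith, by push_cast; linarith⟩

/-- Circular colourings of `Γ*_{n+2}` are the same as real labels of the vertices whose residues
modulo `r` satisfy the edge constraints. -/
lemma hasCircularColoring_iff {n : ℕ} {r : ℝ} (hr : 2 ≤ r) :
    HasCircularColoring (GammaStarGraph (n + 2)) (gammaStarSign (n + 2)) r ↔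
      ∃ g : ℕ → ℝ, ∀ p q s, (p, q, s) ∈ gammaStarList (n + 2) → EdgeRel r s (g p) (g q) := by
  have hr0 : 0 < r := by linarith
  constructor
  · rintro ⟨f, hf, hadj⟩
    refine ⟨fun p => if h : p < 2 * (n + 2) then f ⟨p, h⟩ else 0, fun p q s h => ?_⟩
    obtain ⟨hpq, hq⟩ := gammaStarList_lt h
    have hp : p < 2 * (n + 2) := by omega
    simp only [hp, hq, dif_pos]
    have := hadj ⟨p, hp⟩ ⟨q, hq⟩ (by
      simp only [GammaStarGraph, SimpleGraph.fromRel_adj, ne_eq, Fin.mk.injEq]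
      exact ⟨by omega, Or.inl ⟨s, h⟩⟩)
    rw [gammaStarSign_eq (s := s) h] at this
    exact edge_of_coloring (hf _) (hf _) this
  · rintro ⟨g, hg⟩
    let f : Fin (2 * (n + 2)) → ℝ := fun v => toIcoMod hr0 0 (g v)
    have hf : ∀ v, 0 ≤ f v ∧ f v < r := fun v => by
      have := toIcoMod_mem_Ico hr0 0 (g v)
      simpa using this
    have key : ∀ u v : Fin (2 * (n + 2)), ∀ s, ((u : ℕ), (v : ℕ), s) ∈ gammaStarList (n + 2) →
        EdgeRel r s (f u) (f v) := by
      intro u v s h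
      have h := hg _ _ _ h
      have e : ∀ v, f v = g v - (toIcoDiv hr0 0 (g v) : ℤ) * r := fun v => by
        simp only [f, toIcoMod, zsmul_eq_mul]
      rw [e, e]
      cases s with
      | true => exact PosRel.shift h _ _
      | false => exact NearRel.shift h _ _
    refine ⟨f, hf, fun u v huv => ?_⟩
    simp only [GammaStarGraph, SimpleGraph.fromRel_adj] at huv
    rcases huv.2 with ⟨s, h⟩ | ⟨s, h⟩
    · rw [gammaStarSign_eq h]
      exact coloring_of_edge hr (hf u) (hf v) (key u v s h)
    · rw [Sym2.eq_swap, gammaStarSign_eq h, abs_sub_comm]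
      exact coloring_of_edge hr (hf v) (hf u) (key v u s h)

/-! ### The lower bound -/

lemma PosRel.near_antipode {r x y : ℝ} (h : PosRel r x y) :
    NearRel r (r / 2 - 1) (x + r / 2) y := by
  obtain ⟨m, h1, h2⟩ := h
  exact ⟨m, by linarith, by linarith⟩

lemma NearRel.pos_antipode {r x y : ℝ} (h : NearRel r (r / 2 - 1) x y) :
    PosRel r (x + r / 2) y := by
  obtain ⟨m, h1, h2⟩ := h
  exact ⟨m - 1, by push_cast; linarith, by push_cast; linarith⟩

/-- Two points at distance at least `1` from a common point are at distance at most `r - 2`. -/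
lemma near_of_pos_pos {r a b w : ℝ} (ha : PosRel r a w) (hb : PosRel r b w) :
    NearRel r (r - 2) a b := by
  obtain ⟨m, h1, h2⟩ := ha
  obtain ⟨m', h1', h2'⟩ := hb
  exact ⟨m - m', by push_cast; linarith, by push_cast; linarith⟩

/-- The points compatible with a positive edge to `a` and a negative edge to `b` lie, modulo `r`,
in a single interval of length `d - (2 - r / 2)`. -/
lemma arc {r d a b : ℝ} (hr : 2 ≤ r) (hr4 : r < 4) (hd : d ≤ r - 2) (hab : NearRel r d a b) :
    ∃ c, ∀ x, PosRel r a x → NearRel r (r / 2 - 1) b x →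
      ∃ m : ℤ, c ≤ x - m * r ∧ x - m * r ≤ c + (d - (2 - r / 2)) := by
  obtain ⟨k, k1, k2⟩ := hab
  -- `e` is the signed circular distance from `a` to `b`; its sign tells the side of the arc.
  obtain ⟨e, he⟩ : ∃ e, e = b - a - k * r := ⟨_, rfl⟩
  rw [← he] at k1 k2
  have lift : ∀ x, PosRel r a x → NearRel r (r / 2 - 1) b x → ∃ m : ℤ,
      1 ≤ x - a - m * r ∧ x - a - m * r ≤ r - 1 ∧
      ((0 ≤ e ∧ x - a - m * r ≤ e + (r / 2 - 1)) ∨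
        (e < 0 ∧ r + e - (r / 2 - 1) ≤ x - a - m * r)) := by
    rintro x ⟨m, h1, h2⟩ ⟨m', h1', h2'⟩
    refine ⟨m, h1, h2, ?_⟩
    obtain ⟨j, hj⟩ : ∃ j : ℤ, j = m' + k - m := ⟨_, rfl⟩
    have hj' : (j : ℝ) * r = m' * r + k * r - m * r := by
      rw [hj]; push_cast; ring
    have hlo : -(2 * r) < j * r := by linarith
    have hhi : j * r < 2 * r := by linarith
    rcases int_cases (by linarith : 0 < r) hlo hhi with h | h | h <;> rw [h] at hj' <;>
      push_cast at hj'
    · linarith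
    · left
      constructor <;> linarith
    · right
      constructor <;> linarith
  rcases le_or_gt 0 e with h0 | h0
  · refine ⟨a + 1, fun x hx hx' => ?_⟩
    obtain ⟨m, h1, h2, h | h⟩ := lift x hx hx'
    · exact ⟨m, by linarith, by linarith⟩
    · linarith
  · refine ⟨a + r - 1 - (d - (2 - r / 2)), fun x hx hx' => ?_⟩
    obtain ⟨m, h1, h2, h | h⟩ := lift x hx hx'
    · linarith
    · exact ⟨m, by linarith, by linarith⟩

lemma near_step {r d a b x y : ℝ} (hr : 2 ≤ r) (hr4 : r < 4) (hd : d ≤ r - 2)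
    (hab : NearRel r d a b) (hax : PosRel r a x) (hbx : NearRel r (r / 2 - 1) b x)
    (hay : PosRel r a y) (hby : NearRel r (r / 2 - 1) b y) :
    NearRel r (d - (2 - r / 2)) x y := by
  obtain ⟨c, hc⟩ := arc hr hr4 hd hab
  obtain ⟨m, h1, h2⟩ := hc x hax hbx
  obtain ⟨m', h1', h2'⟩ := hc y hay hby
  exact ⟨m' - m, by push_cast; linarith, by push_cast; linarith⟩

lemma lower_bound {n : ℕ} {r : ℝ} (hr : 2 ≤ r) (g : ℕ → ℝ)
    (hg : ∀ p q s, (p, q, s) ∈ gammaStarList (n + 2) → EdgeRel r s (g p) (g q)) :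
    4 - 4 / ((n : ℝ) + 3) ≤ r := by
  have hn : (0 : ℝ) < (n : ℝ) + 3 := by positivity
  by_contra! hlt
  have hr4 : r < 4 := by
    have : 0 < 4 / ((n : ℝ) + 3) := by positivity
    linarith
  -- The colour of the odd vertex of pair `k`, replaced by its antipode for `k = 0`.
  let b : ℕ → ℝ := fun k => if k = 0 then g 1 + r / 2 else g (2 * k + 1)
  have hpos : ∀ k q, ((k ≤ n ∧ q = 2 * k + 2) ∨ (k < n ∧ q = 2 * k + 3)) →
      PosRel r (g (2 * k)) (g q) := fun k q h => by
    simpa [EdgeRel] using hg (2 * k) q true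
      ((mem_gammaStarList _ _ _ _).2 (Or.inl ⟨k, h, Or.inl ⟨rfl, rfl⟩⟩))
  have hneg : ∀ k q, ((k ≤ n ∧ q = 2 * k + 2) ∨ (k < n ∧ q = 2 * k + 3)) →
      NearRel r (r / 2 - 1) (b k) (g q) := fun k q h => by
    have := hg (2 * k + 1) q (decide (k = 0))
      ((mem_gammaStarList _ _ _ _).2 (Or.inl ⟨k, h, Or.inr ⟨rfl, rfl⟩⟩))
    by_cases hk : k = 0
    · subst hk
      simp only [EdgeRel, decide_true, if_true] at this
      simpa [b] using this.near_antipode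
    · simpa [EdgeRel, b, hk] using this
  have hnear : ∀ k, k ≤ n → NearRel r (r - 2 - k * (2 - r / 2)) (g (2 * k)) (b k) := by
    intro k
    induction k with
    | zero =>
      intro _
      have h0 : PosRel r (g 0) (g (2 * n + 3)) := by
        simpa [EdgeRel] using hg 0 (2 * n + 3) true ((mem_gammaStarList _ _ _ _).2 (by simp))
      have h1 : NearRel r (r / 2 - 1) (g 1) (g (2 * n + 3)) := by
        simpa [EdgeRel] using hg 1 (2 * n + 3) false ((mem_gammaStarList _ _ _ _).2 (by simp))
      simpa [b] using near_of_pos_pos h0 h1.pos_antipode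
    | succ k ih =>
      intro hk
      have hd : r - 2 - k * (2 - r / 2) ≤ r - 2 := by
        have : 0 ≤ (k : ℝ) * (2 - r / 2) := mul_nonneg (by positivity) (by linarith)
        linarith
      have := near_step hr hr4 hd (ih (by omega))
        (hpos k (2 * k + 2) (by omega)) (hneg k (2 * k + 2) (by omega))
        (hpos k (2 * k + 3) (by omega)) (hneg k (2 * k + 3) (by omega))
      have e : r - 2 - ((k + 1 : ℕ) : ℝ) * (2 - r / 2) =
          r - 2 - k * (2 - r / 2) - (2 - r / 2) := by
        push_cast; ring
      rw [e]
      have hb : b (k + 1) = g (2 * k + 3) := by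
        simp only [b, Nat.add_eq_zero_iff, one_ne_zero, and_false, if_false]
        rfl
      rw [hb]
      exact this
  have hd : r - 2 - n * (2 - r / 2) ≤ r - 2 := by
    have : 0 ≤ (n : ℝ) * (2 - r / 2) := mul_nonneg (by positivity) (by linarith)
    linarith
  -- Taking both points equal to the colour of `2n+2` shows that the last arc is nonempty.
  obtain ⟨m, h1, h2⟩ := near_step hr hr4 hd (hnear n le_rfl)
    (hpos n (2 * n + 2) (by omega)) (hneg n (2 * n + 2) (by omega))
    (hpos n (2 * n + 2) (by omega)) (hneg n (2 * n + 2) (by omega))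
  have h3 : (4 - r) * ((n : ℝ) + 3) ≤ 4 := by linarith
  have h4 : 4 - r ≤ 4 / ((n : ℝ) + 3) := (le_div_iff₀ hn).2 h3
  linarith

/-! ### The extremal colouring -/

/-- The colouring of `Γ*_{n+2}` modulo `r = 4 - 2t`, `t = 2 / (n + 3)`: `k` at `2k`,
`k + (n + 1 - k) t` at `2k+1`, with `1` moved to the antipode, and `-1` at `2n+3`. -/
noncomputable def gammaColor (n : ℕ) (t : ℝ) (p : ℕ) : ℝ :=
  if p = 2 * n + 3 then -1
  else if p = 1 then (n + 1) * t + (2 - t)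
  else if p % 2 = 0 then (p / 2 : ℕ)
  else (p / 2 : ℕ) + (n + 1 - (p / 2 : ℕ)) * t

lemma gammaColor_even {n k : ℕ} (t : ℝ) : gammaColor n t (2 * k) = k := by
  have h1 : 2 * k ≠ 2 * n + 3 := by omega
  have h2 : 2 * k ≠ 1 := by omega
  simp [gammaColor, h1, h2]

lemma gammaColor_odd {n k : ℕ} (t : ℝ) (hk : k < n) :
    gammaColor n t (2 * k + 3) = (k + 1) + (n - k) * t := by
  have h1 : 2 * k + 3 ≠ 2 * n + 3 := by omega
  have h2 : (2 * k + 3) % 2 ≠ 0 := by omega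
  have h3 : (2 * k + 3) / 2 = k + 1 := by omega
  rw [gammaColor, if_neg h1, if_neg (by omega), if_neg h2, h3]
  push_cast
  ring

lemma gammaColor_valid {n : ℕ} {t : ℝ} (ht : t * ((n : ℝ) + 3) = 2) (p q : ℕ) (s : Bool)
    (h : (p, q, s) ∈ gammaStarList (n + 2)) :
    EdgeRel (4 - 2 * t) s (gammaColor n t p) (gammaColor n t q) := by
  have ht0 : 0 < t := by
    by_contra! h
    have := mul_nonpos_of_nonpos_of_nonneg h (by positivity : (0 : ℝ) ≤ (n : ℝ) + 3)
    linarith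
  have hlast : gammaColor n t (2 * n + 3) = -1 := by simp [gammaColor]
  have hone : gammaColor n t 1 = (n + 1) * t + (2 - t) := by simp [gammaColor]
  have hnt : 0 ≤ (n : ℝ) * t := by positivity
  rw [mem_gammaStarList] at h
  rcases h with ⟨k, hq, hp⟩ | ⟨rfl, rfl, rfl⟩ | ⟨rfl, rfl, rfl⟩
  · have hkn : k ≤ n := by omega
    have hkt : (k : ℝ) * t ≤ n * t :=
      mul_le_mul_of_nonneg_right (by exact_mod_cast hkn) ht0.le
    have hkt0 : 0 ≤ (k : ℝ) * t := by positivity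
    have hq' : gammaColor n t q = k + 1 ∨ gammaColor n t q = (k + 1) + (n - k) * t := by
      rcases hq with ⟨_, rfl⟩ | ⟨hk, rfl⟩
      · left
        rw [show 2 * k + 2 = 2 * (k + 1) by ring, gammaColor_even]
        push_cast; rfl
      · exact Or.inr (gammaColor_odd t hk)
    rcases hp with ⟨rfl, rfl⟩ | ⟨rfl, rfl⟩
    · rw [gammaColor_even]
      simp only [EdgeRel, if_true]
      refine ⟨0, ?_⟩
      push_cast
      rcases hq' with e | e <;> rw [e] <;> constructor <;> linarith
    · rcases k with _ | k
      · simp only [EdgeRel, mul_zero, zero_add, decide_true, if_true, hone]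
        refine ⟨-1, ?_⟩
        push_cast at hq' ⊢
        rcases hq' with e | e <;> rw [e] <;> constructor <;> linarith
      · have hb : gammaColor n t (2 * (k + 1) + 1) = (k + 1) + (n - k) * t := by
          rw [show 2 * (k + 1) + 1 = 2 * k + 3 by ring, gammaColor_odd t (by omega)]
        simp only [EdgeRel, Nat.add_eq_zero_iff, one_ne_zero, and_false, decide_false,
          Bool.false_eq_true, if_false, hb]
        refine ⟨0, ?_⟩
        push_cast at hq' hkt hkt0 ⊢
        rcases hq' with e | e <;> rw [e] <;> constructor <;> linarith
  · have h0 : gammaColor n t 0 = 0 := by simpa using gammaColor_even (n := n) (k := 0) t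
    simp only [EdgeRel, if_true, h0, hlast]
    refine ⟨-1, ?_⟩
    push_cast
    constructor <;> linarith
  · simp only [EdgeRel, Bool.false_eq_true, if_false, hone, hlast]
    refine ⟨-1, ?_⟩
    push_cast
    constructor <;> linarith

/-- For every `i ≥ 2`, the signed bipartite planar simple graph `Γ*_i` on `2i` vertices
satisfies `χ_c(Γ*_i) = 4 - 4/(i+1)`. -/
theorem circChrom_gammaStar (i : ℕ) (hi : 2 ≤ i) :
    circChrom (GammaStarGraph i) (gammaStarSign i) =
      ENNReal.ofReal (4 - 4 / ((i : ℝ) + 1)) := by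
  obtain ⟨n, rfl⟩ : ∃ n, i = n + 2 := ⟨i - 2, by omega⟩
  have hn : (0 : ℝ) < (n : ℝ) + 3 := by positivity
  have e : ((n + 2 : ℕ) : ℝ) + 1 = (n : ℝ) + 3 := by push_cast; ring
  rw [e]
  apply le_antisymm
  · refine sInf_le ⟨_, ⟨?_, ?_⟩, rfl⟩
    · have : 4 / ((n : ℝ) + 3) ≤ 2 := by
        rw [div_le_iff₀ hn]
        have : (0 : ℝ) ≤ n := by positivity
        linarith
      linarith
    · rw [hasCircularColoring_iff]
      · have ht : 2 / ((n : ℝ) + 3) * ((n : ℝ) + 3) = 2 := by field_simp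
        have e' : 4 - 4 / ((n : ℝ) + 3) = 4 - 2 * (2 / ((n : ℝ) + 3)) := by ring
        rw [e']
        exact ⟨_, gammaColor_valid ht⟩
      · have : 4 / ((n : ℝ) + 3) ≤ 2 := by
          rw [div_le_iff₀ hn]
          have : (0 : ℝ) ≤ n := by positivity
          linarith
        linarith
  · refine le_sInf ?_
    rintro _ ⟨r, ⟨hr, hc⟩, rfl⟩
    obtain ⟨g, hg⟩ := (hasCircularColoring_iff hr).1 hc
    exact ENNReal.ofReal_le_ofReal (lower_bound hr g hg)
end
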